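/- arXiv:1307.7438 — 2 statements merged into one kernel-verified Lean document; each statement's English description precedes it below -/
import Mathlib

section
/- If β ∈ F̃ and q(β) = 0, then β is a positive root of the quiver Q. -/
open Polynomial Matrix BigOperators

namespace DS

noncomputable section

/-- The data of a collection of HTL normal forms `B⁽ⁱ⁾`, `i = 0,…,p`, on `ℂⁿ`:
block counts `m i`, pole orders `kk i`, block sizes `nn i j`, irregular parts
`q i j ∈ s²ℂ[s]` (pairwise distinct, degree ≤ kk i), residue blocks `R i j`,
chosen annihilating eigenvalue lists `ξ i j`, and an identification of
`Σ j, Fin (nn i j)` with `Fin n` (the block decomposition of `ℂⁿ`). -/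
structure Setup where
  p : ℕ
  n : ℕ
  hn : 0 < n
  m : Fin (p+1) → ℕ
  hm : ∀ i, 0 < m i
  kk : Fin (p+1) → ℕ
  hkk : ∀ i, 0 < kk i
  nn : ∀ i : Fin (p+1), Fin (m i) → ℕ
  q : ∀ i : Fin (p+1), Fin (m i) → Polynomial ℂ
  hq0 : ∀ i j, (q i j).coeff 0 = 0
  hq1 : ∀ i j, (q i j).coeff 1 = 0
  hqdeg : ∀ i j, (q i j).natDegree ≤ kk i
  hqdist : ∀ i : Fin (p+1), ∀ j j' : Fin (m i), j ≠ j' → q i j ≠ q i j'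
  e : ∀ i : Fin (p+1), Fin (m i) → ℕ
  he : ∀ i j, 0 < e i j
  xi : ∀ (i : Fin (p+1)) (j : Fin (m i)), Fin (e i j) → ℂ
  R : ∀ (i : Fin (p+1)) (j : Fin (m i)), Matrix (Fin (nn i j)) (Fin (nn i j)) ℂ
  hxi : ∀ i j, (((List.finRange (e i j)).map fun l => R i j - xi i j l • 1).prod) = 0
  emb : ∀ i : Fin (p+1), (Σ j : Fin (m i), Fin (nn i j)) ≃ Fin n
  hreg : ∀ i : Fin (p+1), ¬ (1 < m i ∨ i = 0) → kk i = 1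

/-- `i ∈ I_irr` : the indices of irregular singular points together with `0`. -/
def Iirr (S : Setup) (i : Fin (S.p+1)) : Prop := 1 < S.m i ∨ i = 0

instance (S : Setup) : DecidablePred (Iirr S) := fun i =>
  inferInstanceAs (Decidable (1 < S.m i ∨ i = 0))

/-- Vertices `[i,j]` for `i ∈ I_irr`. -/
abbrev Vb (S : Setup) := Σ i : {i : Fin (S.p+1) // Iirr S i}, Fin (S.m i.1)

/-- Vertices `[i,j,k]` for `0 ≤ i ≤ p`, `1 ≤ j ≤ m⁽ⁱ⁾`, `1 ≤ k ≤ e[i,j]-1`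
(the third component `κ` encodes `k = κ+1`). -/
abbrev Vr (S : Setup) := Σ i : Fin (S.p+1), Σ j : Fin (S.m i), Fin (S.e i j - 1)

/-- The vertex set `Q₀` of the quiver `Q`. -/
abbrev V (S : Setup) := Vb S ⊕ Vr S

/-- `d_i(j,j') = deg (q_j - q_j') - 2`. -/
def dcnt (S : Setup) (i : Fin (S.p+1)) (j j' : Fin (S.m i)) : ℕ :=
  (S.q i j - S.q i j').natDegree - 2

/-- The number of arrows of `Q` from a vertex `a` to a vertex `b`. -/
def arr (S : Setup) : V S → V S → ℕ
  | .inl ⟨i, j⟩, .inl ⟨i', j'⟩ =>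
      (if i.1 = 0 ∧ i'.1 ≠ 0 then 1 else 0) +
      (if h : i = i' then
        (if (j : ℕ) < (j' : ℕ) then dcnt S i.1 j (Fin.cast (by rw [h]) j') else 0)
       else 0)
  | .inl _, .inr _ => 0
  | .inr ⟨i, j, κ⟩, .inl ⟨i', j'⟩ =>
      (if i = i'.1 ∧ (j : ℕ) = (j' : ℕ) ∧ (κ : ℕ) = 0 then 1 else 0) +
      (if ¬ Iirr S i ∧ i'.1 = 0 ∧ (j : ℕ) = 0 ∧ (κ : ℕ) = 0 then 1 else 0)
  | .inr ⟨i, j, κ⟩, .inr ⟨i', j', κ'⟩ =>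
      if i = i' ∧ (j : ℕ) = (j' : ℕ) ∧ (κ : ℕ) = (κ' : ℕ) + 1 then 1 else 0

/-- The Euler form `⟨β,γ⟩` of the quiver `Q`. -/
def eform (S : Setup) (β γ : V S → ℤ) : ℤ :=
  (∑ a : V S, β a * γ a) - ∑ a : V S, ∑ b : V S, (arr S a b : ℤ) * β a * γ b

/-- The symmetrized bilinear form `(β,γ)`. -/
def bform (S : Setup) (β γ : V S → ℤ) : ℤ := eform S β γ + eform S γ β

/-- The quadratic form `q(β)`. -/
def qform (S : Setup) (β : V S → ℤ) : ℤ := eform S β β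

/-- `p(β) = 1 - q(β)`. -/
def pform (S : Setup) (β : V S → ℤ) : ℤ := 1 - qform S β

/-- The coordinate vector `ε_a`. -/
def eps (S : Setup) (a : V S) : V S → ℤ := fun b => if b = a then 1 else 0

/-- The fundamental reflection `s_a`. -/
def refl1 (S : Setup) (a : V S) (β : V S → ℤ) : V S → ℤ :=
  fun b => β b - bform S β (eps S a) * eps S a b

/-- Iterated fundamental reflections (a Weyl group element). -/
def reflList (S : Setup) (l : List (V S)) (β : V S → ℤ) : V S → ℤ :=
  l.foldr (refl1 S) β

/-- The support of a vector. -/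
def supp (S : Setup) (β : V S → ℤ) : Set (V S) := {a | β a ≠ 0}

/-- The support of `β` is connected in the underlying graph of `Q`. -/
def connSupp (S : Setup) (β : V S → ℤ) : Prop :=
  ∀ a ∈ supp S β, ∀ b ∈ supp S β,
    Relation.ReflTransGen
      (fun x y => (0 < arr S x y + arr S y x) ∧ x ∈ supp S β ∧ y ∈ supp S β) a b

/-- The fundamental set of the root system of `Q` (all vertices of `Q` are loop-free). -/
def fund (S : Setup) (β : V S → ℤ) : Prop :=
  β ≠ 0 ∧ (∀ a, 0 ≤ β a) ∧ connSupp S β ∧ ∀ a : V S, bform S β (eps S a) ≤ 0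

/-- Real roots of `Q`. -/
def isRealRoot (S : Setup) (β : V S → ℤ) : Prop :=
  ∃ (l : List (V S)) (a : V S), β = reflList S l (eps S a)

/-- Imaginary roots of `Q`. -/
def isImagRoot (S : Setup) (β : V S → ℤ) : Prop :=
  ∃ (l : List (V S)) (γ : V S → ℤ), (fund S γ ∨ fund S (-γ)) ∧ β = reflList S l γ

/-- Roots of `Q`. -/
def isRoot (S : Setup) (β : V S → ℤ) : Prop := isRealRoot S β ∨ isImagRoot S β

/-- Positive roots of `Q`. -/
def isPosRoot (S : Setup) (β : V S → ℤ) : Prop := isRoot S β ∧ ∀ a, 0 ≤ β a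

/-- The index `0` as an element of `I_irr`. -/
def i0 (S : Setup) : {i : Fin (S.p+1) // Iirr S i} := ⟨0, Or.inr rfl⟩

/-- The vertex `[0,j]`. -/
def v0 (S : Setup) (j : Fin (S.m 0)) : V S := Sum.inl ⟨i0 S, j⟩

/-- The vertex `[i,j]` for `i ∈ I_irr`. -/
def vI (S : Setup) (i : {i : Fin (S.p+1) // Iirr S i}) (j : Fin (S.m i.1)) : V S :=
  Sum.inl ⟨i, j⟩

/-- The lattice `L`: `Σ_j β_[0,j] = Σ_j β_[i,j]` for all `i ∈ I_irr ∖ {0}`. -/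
def inL (S : Setup) (β : V S → ℤ) : Prop :=
  ∀ i : {i : Fin (S.p+1) // Iirr S i}, i.1 ≠ 0 →
    (∑ j : Fin (S.m 0), β (v0 S j)) = ∑ j : Fin (S.m i.1), β (vI S i j)

/-- `L⁺ = L ∩ (ℤ≥0)^{Q₀}`. -/
def inLpos (S : Setup) (β : V S → ℤ) : Prop := inL S β ∧ ∀ a, 0 ≤ β a

/-- The dimension vector `α` (as natural numbers):
`α_[i,j] = n⁽ⁱ⁾_j`, `α_[i,j,k] = rank ∏_{l=1}^k (R⁽ⁱ⁾_j - ξ^{[i,j]}_l)`. -/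
noncomputable def alN (S : Setup) : V S → ℕ
  | .inl ⟨i, j⟩ => S.nn i.1 j
  | .inr ⟨i, j, κ⟩ =>
      ((((List.finRange (S.e i j)).take ((κ : ℕ) + 1)).map
          fun l => S.R i j - S.xi i j l • 1).prod).rank

/-- The dimension vector `α` as an integer vector. -/
noncomputable def alZ (S : Setup) : V S → ℤ := fun a => (alN S a : ℤ)

/-- The parameter `λ ∈ ℂ^{Q₀}`. -/
noncomputable def lam (S : Setup) : V S → ℂ
  | .inl ⟨i, j⟩ =>
      if h : i.1 = 0 then
        (- S.xi 0 (Fin.cast (by rw [h]) j) ⟨0, S.he 0 (Fin.cast (by rw [h]) j)⟩)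
          - ∑ i' ∈ Finset.univ.filter (fun i' : Fin (S.p+1) => ¬ Iirr S i'),
              S.xi i' ⟨0, S.hm i'⟩ ⟨0, S.he i' ⟨0, S.hm i'⟩⟩
      else - S.xi i.1 j ⟨0, S.he i.1 j⟩
  | .inr ⟨i, j, κ⟩ =>
      S.xi i j ⟨(κ : ℕ), by have := κ.2; omega⟩
        - S.xi i j ⟨(κ : ℕ) + 1, by have := κ.2; omega⟩

/-- Pairing `β · μ = Σ_a β_a μ_a` between `ℤ^{Q₀}` and `ℂ^{Q₀}`. -/
noncomputable def dotC (S : Setup) (β : V S → ℤ) (μ : V S → ℂ) : ℂ :=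
  ∑ a : V S, (β a : ℂ) * μ a

/-- `β ∈ R̃⁺_μ` : positive roots of `Q` lying in `L` with `β·μ = 0`. -/
def inRt (S : Setup) (μ : V S → ℂ) (β : V S → ℤ) : Prop :=
  isPosRoot S β ∧ inL S β ∧ dotC S β μ = 0

/-- `β ∈ ℕR̃⁺_μ` : finite sums (including `0`) of elements of `R̃⁺_μ`. -/
def inNRt (S : Setup) (μ : V S → ℂ) (β : V S → ℤ) : Prop :=
  ∃ (r : ℕ) (γ : Fin r → (V S → ℤ)), (∀ t, inRt S μ (γ t)) ∧ β = ∑ t, γ t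

/-- `β ∈ Σ̃_μ`. -/
def inSig (S : Setup) (μ : V S → ℂ) (β : V S → ℤ) : Prop :=
  inRt S μ β ∧ ∀ (r : ℕ), 2 ≤ r → ∀ γ : Fin r → (V S → ℤ),
    (∀ t, inRt S μ (γ t)) → β = ∑ t, γ t → (∑ t, pform S (γ t)) < pform S β

/-! ### The matrix side: truncated orbits.

An element `Σ_{j=1}^{k} A_j x^{-j}` of `𝔤_k*` is encoded as the polynomial matrix
`Σ_{j=1}^{k} A_j x^{k-j}` (of degree `< k`); the coadjoint `G_k`-action becomes
conjugation modulo `x^k` by polynomial matrices with invertible constant term. -/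

abbrev PMat (S : Setup) := Matrix (Fin S.n) (Fin S.n) (Polynomial ℂ)

/-- All entries have degree `< k`. -/
def degLT (S : Setup) (k : ℕ) (A : PMat S) : Prop :=
  ∀ a b, (A a b).degree < (k : ℕ)

/-- The HTL normal form `B⁽ⁱ⁾`, in the polynomial encoding. -/
noncomputable def Bmat (S : Setup) (i : Fin (S.p+1)) : PMat S :=
  Matrix.of fun a b =>
    if h : ((S.emb i).symm a).1 = ((S.emb i).symm b).1 then
      (if Fin.cast (by rw [h]) ((S.emb i).symm a).2 = ((S.emb i).symm b).2 then
          Polynomial.reflect (S.kk i) (S.q i ((S.emb i).symm b).1)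
        else 0)
        + Polynomial.C
            (S.R i ((S.emb i).symm b).1 (Fin.cast (by rw [h]) ((S.emb i).symm a).2)
              ((S.emb i).symm b).2)
          * Polynomial.X ^ (S.kk i - 1)
    else 0

/-- Membership in the truncated orbit `𝒪_{B⁽ⁱ⁾}`. -/
def inOrbit (S : Setup) (i : Fin (S.p+1)) (A : PMat S) : Prop :=
  degLT S (S.kk i) A ∧
  ∃ g : PMat S, IsUnit (g.map fun r => r.coeff 0) ∧
    ∀ a b, (Polynomial.X ^ (S.kk i) : Polynomial ℂ) ∣ (g * Bmat S i - A * g) a b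

/-- The residue matrix `A⁽ⁱ⁾₁`. -/
def resMat (S : Setup) (i : Fin (S.p+1)) (A : PMat S) : Matrix (Fin S.n) (Fin S.n) ℂ :=
  Matrix.of fun a b => (A a b).coeff (S.kk i - 1)

/-- `(A⁽ⁱ⁾)_{0≤i≤p} ∈ ∏ 𝒪_{B⁽ⁱ⁾}` with `Σ A⁽ⁱ⁾₁ = 0`. -/
def isDSElem (S : Setup) (A : ∀ _ : Fin (S.p+1), PMat S) : Prop :=
  (∀ i, inOrbit S i (A i)) ∧ (∑ i, resMat S i (A i)) = 0

/-- Irreducibility of the collection of all coefficient matrices `A⁽ⁱ⁾_j`. -/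
def irredTuple (S : Setup) (A : ∀ _ : Fin (S.p+1), PMat S) : Prop :=
  ∀ W : Submodule ℂ (Fin S.n → ℂ),
    (∀ (i : Fin (S.p+1)) (l : ℕ), ∀ v ∈ W,
        (Matrix.of fun a b => (A i a b).coeff l).mulVec v ∈ W) →
    W = ⊥ ∨ W = ⊤

/-! ### Representations of the double quiver -/

/-- A representation of the double quiver `Q̄` with dimension vector `β`:
`f a b ρ` is the matrix of `ψ_ρ : ℂ^{β a} → ℂ^{β b}` and `g a b ρ` the matrix of
`ψ_{ρ*} : ℂ^{β b} → ℂ^{β a}`, for the `ρ`-th arrow `a → b` of `Q`. -/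
structure Rep (S : Setup) (β : V S → ℕ) where
  f : ∀ a b : V S, Fin (arr S a b) → Matrix (Fin (β b)) (Fin (β a)) ℂ
  g : ∀ a b : V S, Fin (arr S a b) → Matrix (Fin (β a)) (Fin (β b)) ℂ

/-- The moment map at a vertex `c`. -/
noncomputable def moment (S : Setup) {β : V S → ℕ} (M : Rep S β) (c : V S) :
    Matrix (Fin (β c)) (Fin (β c)) ℂ :=
  (∑ a : V S, ∑ ρ : Fin (arr S a c), M.f a c ρ * M.g a c ρ)
    - ∑ b : V S, ∑ ρ : Fin (arr S c b), M.g c b ρ * M.f c b ρ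

/-- `M ∈ Rep(Q̄,β)_μ`. -/
def onMu (S : Setup) {β : V S → ℕ} (μ : V S → ℂ) (M : Rep S β) : Prop :=
  ∀ c : V S, moment S M c = μ c • (1 : Matrix (Fin (β c)) (Fin (β c)) ℂ)

/-- The block matrix `(ψ_{ρ^{[0,j]}_{[i,j']}})_{j,j'}` for `i ∈ I_irr ∖ {0}`. -/
noncomputable def crossMat (S : Setup) {β : V S → ℕ} (M : Rep S β)
    (i : {i : Fin (S.p+1) // Iirr S i}) :
    Matrix (Σ j' : Fin (S.m i.1), Fin (β (vI S i j'))) (Σ j : Fin (S.m 0), Fin (β (v0 S j))) ℂ :=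
  Matrix.of fun x y =>
    if h : 0 < arr S (v0 S y.1) (vI S i x.1) then
      M.f (v0 S y.1) (vI S i x.1) ⟨0, h⟩ x.2 y.2
    else 0

/-- All the block matrices `(ψ_{ρ^{[0,j]}_{[i,j']}})` for `i ∈ I_irr ∖ {0}` are invertible. -/
def crossBij (S : Setup) {β : V S → ℕ} (M : Rep S β) : Prop :=
  ∀ i : {i : Fin (S.p+1) // Iirr S i}, i.1 ≠ 0 →
    Function.Bijective ((crossMat S M i).mulVec)

/-- The combined map `(ψ_{ρ^{[i,1,1]}_{[0,j]}})_j : ℂ^{β [i,1,1]} → ⊕_j ℂ^{β [0,j]}`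
(for `i ∈ I_reg`). -/
noncomputable def regMatF (S : Setup) {β : V S → ℕ} (M : Rep S β)
    (i : Fin (S.p+1)) (j : Fin (S.m i)) (κ : Fin (S.e i j - 1)) :
    Matrix (Σ j' : Fin (S.m 0), Fin (β (v0 S j'))) (Fin (β (Sum.inr ⟨i, j, κ⟩))) ℂ :=
  Matrix.of fun x y =>
    if h : 0 < arr S (Sum.inr ⟨i, j, κ⟩) (v0 S x.1) then
      M.f (Sum.inr ⟨i, j, κ⟩) (v0 S x.1) ⟨0, h⟩ x.2 y
    else 0

/-- The combined map `(ψ_{(ρ^{[i,1,1]}_{[0,j]})*})_j : ⊕_j ℂ^{β [0,j]} → ℂ^{β [i,1,1]}`. -/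
noncomputable def regMatG (S : Setup) {β : V S → ℕ} (M : Rep S β)
    (i : Fin (S.p+1)) (j : Fin (S.m i)) (κ : Fin (S.e i j - 1)) :
    Matrix (Fin (β (Sum.inr ⟨i, j, κ⟩))) (Σ j' : Fin (S.m 0), Fin (β (v0 S j'))) ℂ :=
  Matrix.of fun y x =>
    if h : 0 < arr S (Sum.inr ⟨i, j, κ⟩) (v0 S x.1) then
      M.g (Sum.inr ⟨i, j, κ⟩) (v0 S x.1) ⟨0, h⟩ y x.2
    else 0

/-- `M ∈ Rep(Q̄,β)_μ^{dif}` (the open conditions). -/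
def difCond (S : Setup) {β : V S → ℕ} (M : Rep S β) : Prop :=
  crossBij S M ∧
  (∀ (i : Fin (S.p+1)), ¬ Iirr S i → ∀ (j : Fin (S.m i)) (κ : Fin (S.e i j - 1)),
      (κ : ℕ) = 0 →
      Function.Injective ((regMatF S M i j κ).mulVec) ∧
      Function.Surjective ((regMatG S M i j κ).mulVec)) ∧
  (∀ (i : Fin (S.p+1)) (j : Fin (S.m i)) (κ : Fin (S.e i j - 1)) (b : V S)
      (ρ : Fin (arr S (Sum.inr ⟨i, j, κ⟩) b)),
      (¬ Iirr S i ∧ (κ : ℕ) = 0) ∨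
      (Function.Injective ((M.f (Sum.inr ⟨i, j, κ⟩) b ρ).mulVec) ∧
       Function.Surjective ((M.g (Sum.inr ⟨i, j, κ⟩) b ρ).mulVec)))

/-- A family of subspaces forming a subrepresentation of `M`. -/
def isSubrep (S : Setup) {β : V S → ℕ} (M : Rep S β)
    (W : ∀ a : V S, Submodule ℂ (Fin (β a) → ℂ)) : Prop :=
  ∀ (a b : V S) (ρ : Fin (arr S a b)),
    (∀ v ∈ W a, (M.f a b ρ).mulVec v ∈ W b) ∧ (∀ v ∈ W b, (M.g a b ρ).mulVec v ∈ W a)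

/-- Irreducibility of a representation. -/
def irredRep (S : Setup) {β : V S → ℕ} (M : Rep S β) : Prop :=
  ∀ W, isSubrep S M W → (∀ a, W a = ⊥) ∨ (∀ a, W a = ⊤)

/-- A dimension vector is balanced if `Σ_j γ_[0,j] = Σ_j γ_[i,j]` for all `i ∈ I_irr∖{0}`. -/
def balanced (S : Setup) (γ : V S → ℕ) : Prop :=
  ∀ i : {i : Fin (S.p+1) // Iirr S i}, i.1 ≠ 0 →
    (∑ j : Fin (S.m 0), γ (v0 S j)) = ∑ j : Fin (S.m i.1), γ (vI S i j)

/-- Quasi-irreducibility: no nontrivial proper subrepresentation with balanced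
dimension vector. -/
def quasiIrred (S : Setup) {β : V S → ℕ} (M : Rep S β) : Prop :=
  ∀ W, isSubrep S M W → balanced S (fun a => Module.finrank ℂ (W a)) →
    (∀ a, W a = ⊥) ∨ (∀ a, W a = ⊤)

/-- Simultaneous conjugation of representations by `∏_a GL(β_a, ℂ)`. -/
def repConj (S : Setup) {β : V S → ℕ} (M N : Rep S β) : Prop :=
  ∃ g : ∀ a : V S, (Matrix (Fin (β a)) (Fin (β a)) ℂ)ˣ,
    (∀ a b ρ, N.f a b ρ = ((g b).val * M.f a b ρ) * ((g a)⁻¹).val) ∧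
    (∀ a b ρ, N.g a b ρ = ((g a).val * M.g a b ρ) * ((g b)⁻¹).val)

/-- Simultaneous conjugation of tuples by `GL(n, ℂ)`. -/
def tupConj (S : Setup) (A A' : ∀ _ : Fin (S.p+1), PMat S) : Prop :=
  ∃ g : (Matrix (Fin S.n) (Fin S.n) ℂ)ˣ,
    ∀ i, A' i = (g.val.map Polynomial.C) * A i * ((g⁻¹).val.map Polynomial.C)

/-- Carrier of the moduli space `ℳ*_{st}(𝐁)`. -/
abbrev MstC (S : Setup) := {A : ∀ _ : Fin (S.p+1), PMat S // isDSElem S A ∧ irredTuple S A}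

/-- The moduli space `ℳ*_{st}(𝐁)` of stable connections, identified with conjugacy
classes of irreducible elements of `∏ 𝒪_{B⁽ⁱ⁾}` with vanishing residue sum. -/
abbrev Mst (S : Setup) := Quot (fun A A' : MstC S => tupConj S A.1 A'.1)

abbrev DSC (S : Setup) := {A : ∀ _ : Fin (S.p+1), PMat S // isDSElem S A}

abbrev DSQ (S : Setup) := Quot (fun A A' : DSC S => tupConj S A.1 A'.1)

abbrev RepIrrC (S : Setup) (μ : V S → ℂ) :=
  {M : Rep S (alN S) // onMu S μ M ∧ irredRep S M}

/-- The quiver variety `𝔐^{reg}_μ(Q,α)`. -/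
abbrev Mreg (S : Setup) (μ : V S → ℂ) :=
  Quot (fun M N : RepIrrC S μ => repConj S M.1 N.1)

abbrev DifC (S : Setup) (μ : V S → ℂ) :=
  {M : Rep S (alN S) // onMu S μ M ∧ difCond S M}

abbrev DifQ (S : Setup) (μ : V S → ℂ) :=
  Quot (fun M N : DifC S μ => repConj S M.1 N.1)

abbrev QIC (S : Setup) (μ : V S → ℂ) :=
  {M : Rep S (alN S) // onMu S μ M ∧ quasiIrred S M ∧ crossBij S M}

abbrev QIQ (S : Setup) (μ : V S → ℂ) :=
  Quot (fun M N : QIC S μ => repConj S M.1 N.1)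

/-! ### `J`, `ε_𝐢`, and the equivalence relation `∼` -/

/-- `ε_𝐢 = Σ_{i ∈ I_irr} ε_{[i,j_i]}` for `𝐢 = ([i,j_i]) ∈ 𝒥`. -/
def epsJ (S : Setup) (I : ∀ i : Fin (S.p+1), Fin (S.m i)) : V S → ℤ
  | .inl ⟨i, j⟩ => if (j : ℕ) = (I i.1 : ℕ) then 1 else 0
  | .inr _ => 0

/-- The reflection `s_𝐢`. -/
def sJ (S : Setup) (I : ∀ i : Fin (S.p+1), Fin (S.m i)) (β : V S → ℤ) : V S → ℤ :=
  fun b => β b - bform S β (epsJ S I) * epsJ S I b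

/-- The quasi-fundamental set `F̃`. -/
def quasiFund (S : Setup) (β : V S → ℤ) : Prop :=
  inL S β ∧ (∀ a, 0 ≤ β a) ∧ β ≠ 0 ∧
  (∀ I : ∀ i : Fin (S.p+1), Fin (S.m i), bform S β (epsJ S I) ≤ 0) ∧
  (∀ (i : Fin (S.p+1)) (j : Fin (S.m i)) (κ : Fin (S.e i j - 1)),
      bform S β (eps S (Sum.inr ⟨i, j, κ⟩)) ≤ 0) ∧
  connSupp S β

/-- `μ_𝐢 = Σ_{i ∈ I_irr} μ_{[i,j_i]}`. -/
noncomputable def muJ (S : Setup) (I : ∀ i : Fin (S.p+1), Fin (S.m i)) (μ : V S → ℂ) : ℂ :=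
  ∑ i : {i : Fin (S.p+1) // Iirr S i}, μ (vI S i (I i.1))

/-- The transformed parameter `μ'` in the move `s_𝐢` on pairs. -/
noncomputable def muMove (S : Setup) (I : ∀ i : Fin (S.p+1), Fin (S.m i)) (μ : V S → ℂ) :
    V S → ℂ := fun a =>
  match a with
  | .inl ⟨i, j⟩ =>
      if i.1 = 0 ∧ (j : ℕ) = (I 0 : ℕ) then μ a - 2 * muJ S I μ else μ a
  | .inr ⟨i, j, κ⟩ =>
      if j = I i ∧ (κ : ℕ) = 0 then μ a + muJ S I μ else μ a

/-- The reflected parameter `r_a(μ)` for a vertex `a`. -/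
noncomputable def rvtx (S : Setup) (a : V S) (μ : V S → ℂ) : V S → ℂ :=
  fun b => μ b - ((bform S (eps S a) (eps S b) : ℤ) : ℂ) * μ a

/-- One move generating the relation `∼` on pairs `(β,μ)`. -/
def stepRel (S : Setup) :
    ((V S → ℤ) × (V S → ℂ)) → ((V S → ℤ) × (V S → ℂ)) → Prop := fun x y =>
  (∃ (i : Fin (S.p+1)) (j : Fin (S.m i)) (κ : Fin (S.e i j - 1)),
      x.2 (Sum.inr ⟨i, j, κ⟩) ≠ 0 ∧
      y = (refl1 S (Sum.inr ⟨i, j, κ⟩) x.1, rvtx S (Sum.inr ⟨i, j, κ⟩) x.2)) ∨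
  (∃ I : ∀ i : Fin (S.p+1), Fin (S.m i),
      muJ S I x.2 ≠ 0 ∧ y = (sJ S I x.1, muMove S I x.2))

/-- The smallest equivalence relation `∼` containing all the moves. -/
def pairEquiv (S : Setup) :
    ((V S → ℤ) × (V S → ℂ)) → ((V S → ℤ) × (V S → ℂ)) → Prop :=
  Relation.EqvGen (stepRel S)

/-- The vector `z^{(i₀)}` for `i₀ ∈ I_irr ∖ {0}`. -/
def zvec (S : Setup) (i' : Fin (S.p+1)) : V S → ℂ
  | .inl ⟨i, _⟩ => if i.1 = i' then 1 else if i.1 = 0 then -1 else 0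
  | .inr _ => 0

/-!
Read a vector `β ∈ L` as a family of chains: the chain of `[i,j]` starts with the coordinate at
`[i,j]` (with the common rank `r` of the blocks when `i` is regular) and continues along the leg of
`[i,j]`. On `L` the number `2 q(β)` is a nonnegative combination of values `(β, ε_a)` on legs and
`(β, ε_𝐢)` on transversals, so for `β ∈ F̃` with `q(β) = 0` each of these vanishes wherever it has
positive weight. Hence the legs are harmonic and, for every `i`, the quantity `(β, ε_{[i,j]})` does
not depend on the `j` with `β_{[i,j]} ≠ 0`. Up to normalization it is a defect `Y i ≥ 0`; these
defects sum to `2r`, and `Y i ≥ r` unless a single `j` carries the whole rank of the block `i`.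

Whenever a single `j` carries the whole rank of an irregular block `i ≠ 0`, the reflections along
its leg, starting at `[i,j]`, move the leg one step towards its base. If no `i ≠ 0` has `Y i > r`,
the result lies in the fundamental set. Otherwise exactly one `i₁ ≠ 0` has `Y i₁ > r` and at most
one further defect is nonzero; the reflection at the vertex `[0,j]` carrying the rank and one more
shift, along the leg with that defect, reach the fundamental set. So `β` is an imaginary root.
-/

section Legs

variable {R : Type*} [CommRing R] [LinearOrder R] {E : ℕ} {c : ℕ → R}

/-- A sequence of dimensions `c 0, c 1, …` along a leg with fewer than `E` vertices past its base
`c 0`, such that the bilinear form with the coordinate vector of each vertex `k + 1` in the support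
vanishes. -/
structure IsHarmonicLeg (E : ℕ) (c : ℕ → R) : Prop where
  nonneg : ∀ k, 0 ≤ c k
  eq_zero : ∀ k, E ≤ k → c k = 0
  harmonic : ∀ k, c (k + 1) ≠ 0 → 2 * c (k + 1) = c k + c (k + 2)

theorem IsHarmonicLeg.tail (h : IsHarmonicLeg E c) : IsHarmonicLeg E fun k => c (k + 1) where
  nonneg k := h.nonneg (k + 1)
  eq_zero k hk := h.eq_zero (k + 1) (by omega)
  harmonic k := h.harmonic (k + 1)

variable [IsStrictOrderedRing R]

theorem antitone_of_convex_of_eventually_zero (hconv : ∀ k, 2 * c (k + 1) ≤ c k + c (k + 2))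
    (hzero : ∀ k, E ≤ k → c k = 0) : Antitone c := by
  have succ_le : ∀ n k, E ≤ k + n → c (k + 1) ≤ c k := by
    intro n
    induction n with
    | zero => intro k hk; rw [hzero k hk, hzero (k + 1) (by omega)]
    | succ n ih =>
      intro k hk
      have h := ih (k + 1) (by omega)
      linarith [hconv k]
  exact antitone_nat_of_succ_le fun k => succ_le E k (by omega)

namespace IsHarmonicLeg

theorem antitone (h : IsHarmonicLeg E c) : Antitone c := by
  refine antitone_of_convex_of_eventually_zero (fun k => ?_) h.eq_zero
  by_cases hk : c (k + 1) = 0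
  · linarith [h.nonneg k, h.nonneg (k + 2)]
  · exact (h.harmonic k hk).le

theorem eq_zero_of_le (h : IsHarmonicLeg E c) {m n : ℕ} (hm : c m = 0) (hmn : m ≤ n) :
    c n = 0 :=
  le_antisymm (hm ▸ h.antitone hmn) (h.nonneg n)

theorem apply_zero_le_two_mul_apply_one (h : IsHarmonicLeg E c) (h1 : c 1 ≠ 0) :
    c 0 ≤ 2 * c 1 := by
  linarith [h.harmonic 0 h1, h.nonneg 2]

theorem apply_one_lt_apply_zero (h : IsHarmonicLeg E c) (h0 : 0 < c 0) : c 1 < c 0 := by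
  by_contra hlt
  have h1 : c 1 = c 0 := le_antisymm (h.antitone zero_le_one) (not_lt.1 hlt)
  have const : ∀ k, c k = c 0 ∧ c (k + 1) = c 0 := by
    intro k
    induction k with
    | zero => exact ⟨rfl, h1⟩
    | succ k ih =>
      have hk := h.harmonic k (by rw [ih.2]; exact h0.ne')
      exact ⟨ih.2, by linarith [ih.1, ih.2]⟩
  exact h0.ne' ((const E).1.symm.trans (h.eq_zero E le_rfl))

end IsHarmonicLeg

end Legs

section Transversal

variable {ι R : Type*} [Fintype ι] {κ : ι → Type*} [∀ i, Fintype (κ i)]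
  [CommRing R] [LinearOrder R] [IsStrictOrderedRing R]

/- Each weighted average of `t i` is at most its maximum, while the maxima are attained along a
transversal; both inequalities are therefore equalities. -/
theorem exists_const_on_support_of_sum_transversal_nonpos {w t : ∀ i, κ i → R} {r : R}
    (hr : 0 < r) (hw : ∀ i j, 0 ≤ w i j) (hsum : ∀ i, ∑ j, w i j = r)
    (htrans : ∀ I : ∀ i, κ i, ∑ i, t i (I i) ≤ 0) (hmean : 0 ≤ ∑ i, ∑ j, w i j * t i j) :
    ∃ T : ι → R, (∀ i j, w i j ≠ 0 → t i j = T i) ∧ ∑ i, T i = 0 := by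
  have nonempty (i : ι) : Nonempty (κ i) := by
    by_contra hempty
    rw [not_nonempty_iff] at hempty
    exact hr.ne ((Finset.sum_of_isEmpty _).symm.trans (hsum i))
  choose J hmax using fun i => Finite.exists_max (t i)
  have term_le (i) (j : κ i) : w i j * t i j ≤ w i j * t i (J i) :=
    mul_le_mul_of_nonneg_left (hmax i j) (hw i j)
  have sum_le : ∀ i ∈ Finset.univ, ∑ j, w i j * t i j ≤ ∑ j, w i j * t i (J i) :=
    fun i _ => Finset.sum_le_sum fun j _ => term_le i j
  have sum_max : ∑ i, ∑ j, w i j * t i (J i) = r * ∑ i, t i (J i) := by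
    simp only [← Finset.sum_mul, hsum, Finset.mul_sum]
  have max_nonneg : 0 ≤ r * ∑ i, t i (J i) :=
    sum_max ▸ hmean.trans (Finset.sum_le_sum sum_le)
  have max_zero : ∑ i, t i (J i) = 0 :=
    le_antisymm (htrans J) (nonneg_of_mul_nonneg_right max_nonneg hr)
  have sum_eq : ∑ i, ∑ j, w i j * t i j = ∑ i, ∑ j, w i j * t i (J i) :=
    le_antisymm (Finset.sum_le_sum sum_le) (by rwa [sum_max, max_zero, mul_zero])
  refine ⟨fun i => t i (J i), fun i j hj => ?_, max_zero⟩
  have hi := (Finset.sum_eq_sum_iff_of_le sum_le).1 sum_eq i (Finset.mem_univ i)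
  exact mul_left_cancel₀ hj
    ((Finset.sum_eq_sum_iff_of_le fun j _ => term_le i j).1 hi j (Finset.mem_univ j))

end Transversal

variable {S : Setup}

section Form

/-- The number of edges joining two vertices in the underlying graph of `Q`. -/
def edgeCount (a b : V S) : ℕ := arr S a b + arr S b a

theorem edgeCount_comm (a b : V S) : edgeCount a b = edgeCount b a := add_comm _ _

theorem edgeCount_self (a : V S) : edgeCount a a = 0 := by
  rcases a with ⟨i, j⟩ | ⟨i, j, κ⟩ <;> simp [edgeCount, arr]

theorem bform_eps (β : V S → ℤ) (a : V S) :
    bform S β (eps S a) = 2 * β a - ∑ b, (edgeCount a b : ℤ) * β b := by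
  simp only [bform, eform, eps, edgeCount, mul_ite, mul_one, mul_zero, ite_mul, one_mul, zero_mul,
    Finset.sum_ite_eq', Finset.mem_univ, if_true, Finset.sum_ite_irrel, Finset.sum_const_zero,
    Nat.cast_add, add_mul, Finset.sum_add_distrib]
  ring

theorem bform_eq_sum_mul_bform_eps (β γ : V S → ℤ) :
    bform S β γ = ∑ a, γ a * bform S β (eps S a) := by
  have swap : ∑ a, ∑ b, (arr S a b : ℤ) * β a * γ b = ∑ a, ∑ b, γ a * ((arr S b a : ℤ) * β b) := by
    rw [Finset.sum_comm]
    exact Finset.sum_congr rfl fun a _ => Finset.sum_congr rfl fun b _ => by ring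
  have comm : ∑ a, ∑ b, (arr S a b : ℤ) * γ a * β b = ∑ a, ∑ b, γ a * ((arr S a b : ℤ) * β b) :=
    Finset.sum_congr rfl fun a _ => Finset.sum_congr rfl fun b _ => by ring
  have diag : ∑ a, γ a * (2 * β a) = ∑ a, β a * γ a + ∑ a, γ a * β a := by
    rw [← Finset.sum_add_distrib]
    exact Finset.sum_congr rfl fun a _ => by ring
  simp only [bform_eps, edgeCount, mul_sub, Finset.sum_sub_distrib, Nat.cast_add, add_mul,
    Finset.sum_add_distrib, mul_add, Finset.mul_sum, diag]
  rw [bform, eform, eform, swap, comm]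
  ring

theorem two_mul_qform_eq_sum (β : V S → ℤ) :
    2 * qform S β = ∑ a, β a * bform S β (eps S a) := by
  rw [← bform_eq_sum_mul_bform_eps, bform, qform, two_mul]

theorem bform_eps_nonpos_of_apply_eq_zero {β : V S → ℤ} (hβ : ∀ a, 0 ≤ β a) {a : V S}
    (ha : β a = 0) : bform S β (eps S a) ≤ 0 := by
  rw [bform_eps, ha, mul_zero, zero_sub, neg_nonpos]
  exact Finset.sum_nonneg fun b _ => mul_nonneg (Nat.cast_nonneg _) (hβ b)

/-- Two vectors are Weyl equivalent if a product of fundamental reflections maps the second to the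
first. -/
def WeylEquiv (β γ : V S → ℤ) : Prop := ∃ l : List (V S), β = reflList S l γ

theorem WeylEquiv.refl (β : V S → ℤ) : WeylEquiv β β := ⟨[], rfl⟩

theorem WeylEquiv.trans {β γ δ : V S → ℤ} : WeylEquiv β γ → WeylEquiv γ δ → WeylEquiv β δ := by
  rintro ⟨l, rfl⟩ ⟨l', rfl⟩
  exact ⟨l ++ l', by simp only [reflList, List.foldr_append]⟩

theorem WeylEquiv.of_eq_sub_bform {β γ : V S → ℤ} (a : V S) (hne : ∀ b, b ≠ a → γ b = β b)
    (ha : γ a = β a - bform S β (eps S a)) : WeylEquiv β γ := by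
  have neighbours : ∑ b, (edgeCount a b : ℤ) * γ b = ∑ b, (edgeCount a b : ℤ) * β b := by
    refine Finset.sum_congr rfl fun b _ => ?_
    by_cases hb : b = a
    · simp [hb, edgeCount_self]
    · rw [hne b hb]
  have neg : bform S γ (eps S a) = -bform S β (eps S a) := by
    have hγ := bform_eps γ a
    have hβ := bform_eps β a
    linarith
  refine ⟨[a], funext fun b => ?_⟩
  by_cases hb : b = a
  · subst hb; simp [reflList, refl1, neg, eps, ha]
  · simp [reflList, refl1, eps, hb, hne b hb]

end Form

section Arrows

theorem m_eq_one_of_not_iirr {i : Fin (S.p + 1)} (hi : ¬Iirr S i) : S.m i = 1 :=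
  le_antisymm (not_lt.1 fun h => hi (Or.inl h)) (S.hm i)

theorem iirr_zero : Iirr S 0 := Or.inr rfl

theorem dcnt_comm (i : Fin (S.p + 1)) (j j' : Fin (S.m i)) : dcnt S i j j' = dcnt S i j' j := by
  rw [dcnt, dcnt, ← Polynomial.natDegree_neg, neg_sub]

theorem dcnt_self (i : Fin (S.p + 1)) (j : Fin (S.m i)) : dcnt S i j j = 0 := by
  simp [dcnt]

theorem dcnt_eq_zero_trans {i : Fin (S.p + 1)} {j j' j'' : Fin (S.m i)} (h : dcnt S i j j' = 0)
    (h' : dcnt S i j' j'' = 0) : dcnt S i j j'' = 0 := by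
  have hdeg := Polynomial.natDegree_add_le (S.q i j - S.q i j') (S.q i j' - S.q i j'')
  rw [sub_add_sub_cancel] at hdeg
  simp only [dcnt] at h h' ⊢
  omega

theorem edgeCount_vI_vI (i : {i // Iirr S i}) (j j' : Fin (S.m i.1)) :
    edgeCount (vI S i j) (vI S i j') = dcnt S i.1 j j' := by
  rcases lt_trichotomy j j' with h | rfl | h
  · simp [edgeCount, vI, arr, h, h.le]
  · simp [edgeCount_self, dcnt_self]
  · simp [edgeCount, vI, arr, h, h.le, dcnt_comm i.1 j']

theorem edgeCount_vI_vI_of_ne {i i' : {i // Iirr S i}} (h : i ≠ i') (j : Fin (S.m i.1))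
    (j' : Fin (S.m i'.1)) :
    edgeCount (vI S i j) (vI S i' j') = if i.1 = 0 ∨ i'.1 = 0 then 1 else 0 := by
  have hval : i.1 ≠ i'.1 := Subtype.coe_injective.ne h
  simp only [edgeCount, vI, arr, dif_neg h, dif_neg h.symm]
  by_cases hi : i.1 = 0 <;> by_cases hi' : i'.1 = 0 <;> simp_all

/-- An index `i` together with the index `j` of one of its blocks; it labels the leg
`[i,j,1], [i,j,2], …` of `Q`. -/
abbrev Leg (S : Setup) := Σ i : Fin (S.p + 1), Fin (S.m i)

theorem leg_mk_eq_iff {i i' : Fin (S.p + 1)} {j : Fin (S.m i)} {j' : Fin (S.m i')} :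
    (⟨i, j⟩ : Leg S) = ⟨i', j'⟩ ↔ i = i' ∧ (j : ℕ) = j' := by
  constructor
  · rintro ⟨⟩
    exact ⟨rfl, rfl⟩
  · rintro ⟨rfl, h⟩
    rw [Fin.ext h]

theorem edgeCount_vI_inr (i : {i // Iirr S i}) (j : Fin (S.m i.1)) (x : Leg S)
    (κ : Fin (S.e x.1 x.2 - 1)) :
    edgeCount (vI S i j) (Sum.inr ⟨x.1, x.2, κ⟩) =
      if (κ : ℕ) = 0 then
        (if x = ⟨i.1, j⟩ then 1 else 0) + (if ¬Iirr S x.1 ∧ i.1 = 0 then 1 else 0)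
      else 0 := by
  obtain ⟨i', j'⟩ := x
  have hj : ¬Iirr S i' → (j' : ℕ) = 0 := fun hi' => by
    have := j'.2
    have := m_eq_one_of_not_iirr hi'
    omega
  simp only [edgeCount, vI, arr, zero_add, leg_mk_eq_iff]
  by_cases hκ : (κ : ℕ) = 0 <;> by_cases hi : Iirr S i' <;> simp_all

theorem edgeCount_inr_inr (x y : Leg S) (κ : Fin (S.e x.1 x.2 - 1)) (μ : Fin (S.e y.1 y.2 - 1)) :
    edgeCount (Sum.inr ⟨x.1, x.2, κ⟩ : V S) (Sum.inr ⟨y.1, y.2, μ⟩) =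
      if y = x then (if (μ : ℕ) = κ + 1 then 1 else 0) + (if (κ : ℕ) = μ + 1 then 1 else 0)
      else 0 := by
  obtain ⟨i, j⟩ := x
  obtain ⟨i', j'⟩ := y
  simp only [edgeCount, arr, leg_mk_eq_iff, eq_comm (a := i), eq_comm (a := (j : ℕ)), ← and_assoc]
  by_cases h : i' = i ∧ (j' : ℕ) = j
  · simp only [h, true_and, if_true, and_self, add_comm]
  · simp only [h, false_and, if_false, add_zero]

end Arrows

section Chains

/-- The coordinates of a vector arranged along the legs: `f ⟨i, j⟩ k` is the coordinate at
`[i,j,k]`, where `[i,j,0]` stands for `[i,j]`. The value `f ⟨i, j⟩ 0` is also defined for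
`i ∈ I_reg`, where `Q` has no vertex `[i,j]`. -/
abbrev Chain (S : Setup) := Leg S → ℕ → ℤ

/-- The leg and the position on it of a vertex. -/
def position : V S → Leg S × ℕ
  | .inl ⟨i, j⟩ => (⟨i.1, j⟩, 0)
  | .inr ⟨i, j, κ⟩ => (⟨i, j⟩, κ + 1)

theorem position_injective : Function.Injective (position (S := S)) := by
  rintro (⟨⟨i, hi⟩, j⟩ | ⟨i, j, κ⟩) (⟨⟨i', hi'⟩, j'⟩ | ⟨i', j', κ'⟩) h
  · obtain ⟨⟨⟩, -⟩ := Prod.mk.inj h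
    rfl
  · simp [position] at h
  · simp [position] at h
  · obtain ⟨⟨⟩, hκ⟩ := Prod.mk.inj h
    rw [Fin.ext (Nat.succ.inj hκ)]

/-- The vector whose coordinates are listed by a chain. -/
def toVec (f : Chain S) (a : V S) : ℤ := f (position a).1 (position a).2

theorem toVec_vI (f : Chain S) (i : {i // Iirr S i}) (j : Fin (S.m i.1)) :
    toVec f (vI S i j) = f ⟨i.1, j⟩ 0 := rfl

theorem toVec_inr (f : Chain S) (x : Leg S) (κ : Fin (S.e x.1 x.2 - 1)) :
    toVec f (Sum.inr ⟨x.1, x.2, κ⟩) = f x (κ + 1) := rfl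

/-- A chain terminates if it vanishes beyond the end of each leg. -/
def Terminates (f : Chain S) : Prop := ∀ x k, S.e x.1 x.2 ≤ k → f x k = 0

/-- The total dimension at the vertices `[0,j]`. -/
def rank (f : Chain S) : ℤ := ∑ j, f ⟨0, j⟩ 0

/-- The total dimension at the neighbours of `[0,j]` which have index `i`, for `i ≠ 0`. -/
def attached (f : Chain S) (i : Fin (S.p + 1)) : ℤ :=
  if i = 0 then 0 else if Iirr S i then ∑ j, f ⟨i, j⟩ 0 else ∑ j, f ⟨i, j⟩ 1

/-- The total dimension at the neighbours of `[i,j]` which have an index other than `i`, for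
`i ∈ I_irr`. -/
def link (f : Chain S) (i : Fin (S.p + 1)) : ℤ :=
  if i = 0 then ∑ i', attached f i' else rank f

/-- The contribution of the vertices with index `i` to the form with `ε_[i,j]`. -/
def blockTerm (f : Chain S) (x : Leg S) : ℤ :=
  2 * f x 0 - ∑ j, (dcnt S x.1 x.2 j : ℤ) * f ⟨x.1, j⟩ 0 - f x 1

theorem blockTerm_of_single (f : Chain S) {x : Leg S} (hx : ∀ j, j ≠ x.2 → f ⟨x.1, j⟩ 0 = 0) :
    blockTerm f x = 2 * f x 0 - f x 1 := by
  have : ∑ j, (dcnt S x.1 x.2 j : ℤ) * f ⟨x.1, j⟩ 0 = 0 := by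
    refine Finset.sum_eq_zero fun j _ => ?_
    by_cases hj : j = x.2
    · rw [hj, dcnt_self, Nat.cast_zero, zero_mul]
    · rw [hx j hj, mul_zero]
  rw [blockTerm, this, sub_zero]

theorem sum_fin_ite_val_eq {n : ℕ} {g : ℕ → ℤ} (hg : ∀ k, n ≤ k → g k = 0) (k : ℕ) :
    ∑ κ : Fin n, (if (κ : ℕ) = k then g κ else 0) = g k := by
  rcases lt_or_ge k n with hk | hk
  · have : ∀ κ : Fin n, (κ : ℕ) = k ↔ κ = ⟨k, hk⟩ := fun κ => (Fin.ext_iff (b := ⟨k, hk⟩)).symm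
    simp only [this, Finset.sum_ite_eq', Finset.mem_univ, if_true]
  · rw [hg k hk]
    exact Finset.sum_eq_zero fun κ _ => if_neg (by omega)

theorem sum_subtype_eq_sum_dite {ι : Type*} [Fintype ι] {p : ι → Prop} [DecidablePred p]
    (F : {i // p i} → ℤ) : ∑ i, F i = ∑ i, if h : p i then F ⟨i, h⟩ else 0 := by
  rw [← (Equiv.sumCompl p).sum_comp, Fintype.sum_sum_type]
  refine (add_zero _).symm.trans (congrArg₂ (· + ·) ?_ ?_)
  · exact Finset.sum_congr rfl fun i _ => by simp [i.2]
  · exact (Finset.sum_eq_zero fun i _ => dif_neg i.2).symm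

theorem sum_vertices (F : V S → ℤ) :
    ∑ a, F a = ∑ x : Leg S, ((if h : Iirr S x.1 then F (vI S ⟨x.1, h⟩ x.2) else 0) +
      ∑ κ : Fin (S.e x.1 x.2 - 1), F (Sum.inr ⟨x.1, x.2, κ⟩)) := by
  rw [Fintype.sum_sum_type, Fintype.sum_sigma, Fintype.sum_sigma, sum_subtype_eq_sum_dite,
    ← Finset.sum_add_distrib, Fintype.sum_sigma]
  refine Finset.sum_congr rfl fun i _ => ?_
  rw [Fintype.sum_sigma, Finset.sum_add_distrib]
  split_ifs <;> simp [vI]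

end Chains

section FormOnChains

variable {f : Chain S}

theorem Terminates.sum_leg_ite (hf : Terminates f) (x : Leg S) (k : ℕ) :
    ∑ κ : Fin (S.e x.1 x.2 - 1), (if (κ : ℕ) = k then f x (κ + 1) else 0) = f x (k + 1) :=
  sum_fin_ite_val_eq (g := fun k => f x (k + 1)) (fun k hk => hf x _ (by omega)) k

theorem Terminates.sum_edgeCount_vI_inr (hf : Terminates f) (i : {i // Iirr S i})
    (j : Fin (S.m i.1)) (i' : Fin (S.p + 1)) (j' : Fin (S.m i')) :
    ∑ κ : Fin (S.e i' j' - 1),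
        (edgeCount (vI S i j) (Sum.inr ⟨i', j', κ⟩) : ℤ) * f ⟨i', j'⟩ (κ + 1) =
      (if (⟨i', j'⟩ : Leg S) = ⟨i.1, j⟩ then f ⟨i', j'⟩ 1 else 0) +
        (if ¬Iirr S i' ∧ i.1 = 0 then f ⟨i', j'⟩ 1 else 0) := by
  rw [← hf.sum_leg_ite ⟨i', j'⟩ 0]
  have edge := edgeCount_vI_inr i j ⟨i', j'⟩
  simp only at edge
  simp only [edge]
  split_ifs with h h'
  · have hi : i' = i.1 := congrArg Sigma.fst h
    exact absurd (hi ▸ i.2) h'.1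
  all_goals simp

theorem Terminates.sum_edgeCount_inr_inr (hf : Terminates f) (x y : Leg S)
    (κ : Fin (S.e x.1 x.2 - 1)) :
    ∑ μ : Fin (S.e y.1 y.2 - 1),
        (edgeCount (Sum.inr ⟨x.1, x.2, κ⟩ : V S) (Sum.inr ⟨y.1, y.2, μ⟩) : ℤ) * f y (μ + 1) =
      if y = x then f x (κ + 2) + (if (κ : ℕ) = 0 then 0 else f x κ) else 0 := by
  simp only [edgeCount_inr_inr]
  split_ifs with h hκ
  · subst h
    simp [hκ, hf.sum_leg_ite]
  · subst h
    obtain ⟨k, hk⟩ := Nat.exists_eq_succ_of_ne_zero hκ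
    simp [hk, add_mul, Finset.sum_add_distrib, hf.sum_leg_ite, eq_comm (a := k)]
  · simp

theorem sum_edgeCount_inr_vI (x : Leg S) (κ : Fin (S.e x.1 x.2 - 1)) :
    ∑ y : Leg S, (if h : Iirr S y.1 then
        (edgeCount (Sum.inr ⟨x.1, x.2, κ⟩) (vI S ⟨y.1, h⟩ y.2) : ℤ) * f y 0 else 0) =
      if (κ : ℕ) = 0 then (if Iirr S x.1 then f x 0 else rank f) else 0 := by
  have term (y : Leg S) : (if h : Iirr S y.1 then
        (edgeCount (Sum.inr ⟨x.1, x.2, κ⟩) (vI S ⟨y.1, h⟩ y.2) : ℤ) * f y 0 else 0) =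
      if (κ : ℕ) = 0 then (if Iirr S x.1 then (if y = x then f y 0 else 0) else
        if y.1 = 0 then f y 0 else 0) else 0 := by
    simp only [edgeCount_comm (Sum.inr _), edgeCount_vI_inr, Sigma.eta, eq_comm (a := x)]
    by_cases hy : y = x
    · subst hy
      by_cases hx : Iirr S y.1
      · simp [hx]
      · have h0 : y.1 ≠ 0 := fun h => hx (h ▸ iirr_zero)
        simp [hx, h0]
    · by_cases h0 : y.1 = 0
      · by_cases hx : Iirr S x.1 <;> simp [hx, hy, h0, iirr_zero]
      · by_cases hx : Iirr S x.1 <;> simp [hx, hy, h0]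
  simp only [term]
  split_ifs
  · simp
  · rw [Fintype.sum_sigma]
    exact (Finset.sum_eq_single 0 (fun i _ hi => by simp [hi]) (by simp)).trans (by simp [rank])
  · simp

theorem Terminates.sum_edgeCount_vI (hf : Terminates f) (i : {i // Iirr S i}) (j : Fin (S.m i.1))
    (i' : Fin (S.p + 1)) :
    ∑ j' : Fin (S.m i'), ((if h : Iirr S i' then
        (edgeCount (vI S i j) (vI S ⟨i', h⟩ j') : ℤ) * f ⟨i', j'⟩ 0 else 0) +
      ∑ κ : Fin (S.e i' j' - 1),
        (edgeCount (vI S i j) (Sum.inr ⟨i', j', κ⟩) : ℤ) * f ⟨i', j'⟩ (κ + 1)) =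
      (if i' = i.1 then ∑ j', (dcnt S i.1 j j' : ℤ) * f ⟨i.1, j'⟩ 0 + f ⟨i.1, j⟩ 1 else 0) +
        (if i.1 = 0 then attached f i' else if i' = 0 then rank f else 0) := by
  obtain ⟨i, hi⟩ := i
  simp only [hf.sum_edgeCount_vI_inr]
  by_cases h : i' = i
  · subst h
    by_cases h0 : i' = 0 <;>
      simp_all [edgeCount_vI_vI, Finset.sum_add_distrib, attached, iirr_zero]
  · have hne (hi' : Iirr S i') : (⟨i, hi⟩ : {i // Iirr S i}) ≠ ⟨i', hi'⟩ :=
      fun h' => h (congrArg Subtype.val h').symm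
    have hleg (j' : Fin (S.m i')) : (⟨i', j'⟩ : Leg S) ≠ ⟨i, j⟩ :=
      fun h' => h (congrArg Sigma.fst h')
    by_cases h0 : i = 0
    · by_cases hi' : Iirr S i' <;> simp_all [attached, edgeCount_vI_vI_of_ne]
    · by_cases h0' : i' = 0
      · subst h0'
        simp_all [rank, edgeCount_vI_vI_of_ne, iirr_zero]
      · by_cases hi' : Iirr S i' <;> simp_all [edgeCount_vI_vI_of_ne]

theorem Terminates.bform_vI (hf : Terminates f) (i : {i // Iirr S i}) (j : Fin (S.m i.1)) :
    bform S (toVec f) (eps S (vI S i j)) = blockTerm f ⟨i.1, j⟩ - link f i.1 := by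
  rw [bform_eps, sum_vertices, Fintype.sum_sigma]
  have contribution := Finset.sum_congr rfl fun i' (_ : i' ∈ Finset.univ) =>
    hf.sum_edgeCount_vI i j i'
  refine (congrArg (2 * f ⟨i.1, j⟩ 0 - ·) contribution).trans ?_
  simp only [Finset.sum_add_distrib, Finset.sum_ite_eq', Finset.mem_univ, if_true, blockTerm, link]
  split_ifs with h
  · ring
  · simp only [Finset.sum_ite_eq', Finset.mem_univ, if_true]
    ring

theorem Terminates.bform_inr (hf : Terminates f) (x : Leg S) (κ : Fin (S.e x.1 x.2 - 1)) :
    bform S (toVec f) (eps S (Sum.inr ⟨x.1, x.2, κ⟩)) = 2 * f x (κ + 1) -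
      (if (κ : ℕ) = 0 ∧ ¬Iirr S x.1 then rank f else f x κ) - f x (κ + 2) := by
  rw [bform_eps, sum_vertices, Finset.sum_add_distrib]
  simp only [toVec_vI, toVec_inr, hf.sum_edgeCount_inr_inr, sum_edgeCount_inr_vI,
    Finset.sum_ite_eq', Finset.mem_univ, if_true, Sigma.eta]
  grind

end FormOnChains

section Balanced

variable {f : Chain S}

theorem sum_fin_of_not_iirr {x : Leg S} (hx : ¬Iirr S x.1) (g : Fin (S.m x.1) → ℤ) :
    ∑ j, g j = g x.2 := by
  have : Subsingleton (Fin (S.m x.1)) := by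
    rw [m_eq_one_of_not_iirr hx]
    infer_instance
  exact Fintype.sum_subsingleton g x.2

/-- A chain of the kind that lists the coordinates of an element of `L`: the blocks of every index
have the same total dimension. For `i ∈ I_reg` this fixes the value at `[i,1,0]`. -/
structure IsBalanced (f : Chain S) : Prop where
  terminates : Terminates f
  sum_head : ∀ i, ∑ j, f ⟨i, j⟩ 0 = rank f

/-- The total dimension attached to the block index `i`, corrected at `i = 0` so that these numbers
add up to twice the rank. -/
def offset (f : Chain S) (i : Fin (S.p + 1)) : ℤ :=
  attached f i + if i = 0 then 2 * rank f - ∑ i', attached f i' else 0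

theorem sum_offset (f : Chain S) : ∑ i, offset f i = 2 * rank f := by
  simp [offset, Finset.sum_add_distrib]

/-- The value of the form with `ε_[i,j]` if `i ∈ I_irr`, written so that it makes sense for all
`i`. -/
def excess (f : Chain S) (x : Leg S) : ℤ := blockTerm f x - 2 * rank f + offset f x.1

theorem attached_of_not_iirr {x : Leg S} (hx : ¬Iirr S x.1) : attached f x.1 = f x 1 := by
  have h0 : x.1 ≠ 0 := fun h => hx (h ▸ iirr_zero)
  rw [attached, if_neg h0, if_neg hx, sum_fin_of_not_iirr hx]

theorem blockTerm_of_not_iirr {x : Leg S} (hx : ¬Iirr S x.1) :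
    blockTerm f x = 2 * f x 0 - f x 1 := by
  rw [blockTerm, sum_fin_of_not_iirr hx, dcnt_self]
  simp

namespace IsBalanced

theorem attached_of_iirr (hf : IsBalanced f) {i : Fin (S.p + 1)} (hi : Iirr S i) (h0 : i ≠ 0) :
    attached f i = rank f := by
  rw [attached, if_neg h0, if_pos hi, hf.sum_head]

theorem apply_zero_of_not_iirr (hf : IsBalanced f) {x : Leg S} (hx : ¬Iirr S x.1) :
    f x 0 = rank f :=
  (sum_fin_of_not_iirr hx _).symm.trans (hf.sum_head x.1)

theorem bform_vI (hf : IsBalanced f) (i : {i // Iirr S i}) (j : Fin (S.m i.1)) :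
    bform S (toVec f) (eps S (vI S i j)) = excess f ⟨i.1, j⟩ := by
  rw [hf.terminates.bform_vI, excess, offset, link]
  by_cases h0 : i.1 = 0
  · rw [if_pos h0, if_pos h0, attached, if_pos h0]
    ring
  · rw [if_neg h0, if_neg h0, hf.attached_of_iirr i.2 h0]
    ring

theorem excess_of_not_iirr (hf : IsBalanced f) {x : Leg S} (hx : ¬Iirr S x.1) :
    excess f x = 0 := by
  have h0 : x.1 ≠ 0 := fun h => hx (h ▸ iirr_zero)
  rw [excess, offset, if_neg h0, attached_of_not_iirr hx, blockTerm_of_not_iirr hx,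
    hf.apply_zero_of_not_iirr hx]
  ring

theorem bform_inr (hf : IsBalanced f) (x : Leg S) (κ : Fin (S.e x.1 x.2 - 1)) :
    bform S (toVec f) (eps S (Sum.inr ⟨x.1, x.2, κ⟩)) =
      2 * f x (κ + 1) - f x κ - f x (κ + 2) := by
  rw [hf.terminates.bform_inr]
  split_ifs with h
  · rw [← hf.apply_zero_of_not_iirr h.2, h.1]
  · rfl

theorem sum_mul_bform_eps (hf : IsBalanced f) (γ : Leg S → ℤ) (F : V S → ℤ)
    (hF : ∀ i j, F (vI S i j) = γ ⟨i.1, j⟩) :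
    ∑ a, F a * bform S (toVec f) (eps S a) = ∑ x : Leg S, (γ x * excess f x +
      ∑ κ : Fin (S.e x.1 x.2 - 1),
        F (Sum.inr ⟨x.1, x.2, κ⟩) * (2 * f x (κ + 1) - f x κ - f x (κ + 2))) := by
  rw [sum_vertices]
  refine Finset.sum_congr rfl fun x _ => congrArg₂ (· + ·) ?_ ?_
  · by_cases hx : Iirr S x.1
    · rw [dif_pos hx, hF, hf.bform_vI]
    · rw [dif_neg hx, hf.excess_of_not_iirr hx, mul_zero]
  · simp only [hf.bform_inr]

theorem bform_epsJ (hf : IsBalanced f) (I : ∀ i, Fin (S.m i)) :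
    bform S (toVec f) (epsJ S I) = ∑ i, excess f ⟨i, I i⟩ := by
  rw [bform_eq_sum_mul_bform_eps, hf.sum_mul_bform_eps (fun x => if x.2 = I x.1 then 1 else 0)
    (epsJ S I) fun i j => if_congr Fin.ext_iff.symm rfl rfl, Fintype.sum_sigma]
  simp [epsJ]

theorem two_mul_qform (hf : IsBalanced f) :
    2 * qform S (toVec f) = ∑ x : Leg S, (f x 0 * excess f x +
      ∑ κ : Fin (S.e x.1 x.2 - 1), f x (κ + 1) * (2 * f x (κ + 1) - f x κ - f x (κ + 2))) := by
  rw [two_mul_qform_eq_sum]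
  exact hf.sum_mul_bform_eps (fun x => f x 0) (toVec f) fun _ _ => rfl

end IsBalanced

/-- The chain of the coordinates of a vector. -/
def chainOf (β : V S → ℤ) : Chain S
  | x, 0 => if h : Iirr S x.1 then β (vI S ⟨x.1, h⟩ x.2) else ∑ j, β (v0 S j)
  | x, k + 1 => if h : k < S.e x.1 x.2 - 1 then β (Sum.inr ⟨x.1, x.2, k, h⟩) else 0

theorem toVec_chainOf (β : V S → ℤ) : toVec (chainOf β) = β := by
  funext a
  rcases a with ⟨i, j⟩ | ⟨i, j, κ⟩
  · exact dif_pos i.2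
  · exact dif_pos κ.2

theorem chainOf_nonneg {β : V S → ℤ} (hβ : ∀ a, 0 ≤ β a) (x : Leg S) (k : ℕ) :
    0 ≤ chainOf β x k := by
  cases k with
  | zero =>
    rw [chainOf]
    split_ifs
    exacts [hβ _, Finset.sum_nonneg fun _ _ => hβ _]
  | succ k =>
    rw [chainOf]
    split_ifs
    exacts [hβ _, le_rfl]

theorem rank_chainOf (β : V S → ℤ) : rank (chainOf β) = ∑ j, β (v0 S j) :=
  Finset.sum_congr rfl fun _ _ => dif_pos iirr_zero

theorem isBalanced_chainOf {β : V S → ℤ} (hβ : inL S β) : IsBalanced (chainOf β) where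
  terminates x k hk := by
    obtain ⟨k, rfl⟩ := Nat.exists_eq_succ_of_ne_zero ((S.he x.1 x.2).trans_le hk).ne'
    exact dif_neg (by omega)
  sum_head i := by
    rw [rank_chainOf]
    by_cases hi : Iirr S i
    · by_cases h0 : i = 0
      · subst h0
        exact rank_chainOf β
      · rw [hβ ⟨i, hi⟩ h0]
        exact Finset.sum_congr rfl fun _ _ => dif_pos hi
    · rw [sum_fin_of_not_iirr (x := ⟨i, 0, S.hm i⟩) hi]
      exact dif_neg hi

end Balanced

section Isotropic

variable {b : Chain S} {Y : Fin (S.p + 1) → ℤ}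

/-- The shape of the chain of a quasi-fundamental vector on which `q` vanishes. The number `Y i` is
the common value of `2 * rank b - (β, ε_[i,j])` over the blocks `[i,j]` in the support, where only
the contribution of the vertices with index `i` to the form is counted. -/
structure IsIsotropic (b : Chain S) (Y : Fin (S.p + 1) → ℤ) : Prop where
  leg : ∀ x, IsHarmonicLeg (S.e x.1 x.2) (b x)
  rank_pos : 0 < rank b
  sum_head : ∀ i, ∑ j, b ⟨i, j⟩ 0 = rank b
  blockTerm_eq : ∀ x, b x 0 ≠ 0 → blockTerm b x = 2 * rank b - Y x.1
  sum_defect : ∑ i, Y i = 2 * rank b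

theorem IsBalanced.rank_pos (hb : IsBalanced b) (hnn : ∀ x k, 0 ≤ b x k)
    (hconv : ∀ x k, 2 * b x (k + 1) ≤ b x k + b x (k + 2)) (hne : toVec b ≠ 0) : 0 < rank b := by
  refine lt_of_le_of_ne (Finset.sum_nonneg fun j _ => hnn _ _) fun h0 => hne ?_
  have head (x : Leg S) : b x 0 = 0 :=
    (Finset.sum_eq_zero_iff_of_nonneg fun j _ => hnn ⟨x.1, j⟩ 0).1
      ((hb.sum_head x.1).trans h0.symm) x.2 (Finset.mem_univ _)
  have anti (x : Leg S) : Antitone (b x) :=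
    antitone_of_convex_of_eventually_zero (hconv x) (hb.terminates x)
  exact funext fun a => le_antisymm ((anti _ (Nat.zero_le _)).trans_eq (head _)) (hnn _ _)

theorem IsBalanced.exists_isIsotropic (hb : IsBalanced b) (hnn : ∀ x k, 0 ≤ b x k)
    (hconv : ∀ x k, 2 * b x (k + 1) ≤ b x k + b x (k + 2)) (hr : 0 < rank b)
    (htrans : ∀ I : ∀ i, Fin (S.m i), ∑ i, excess b ⟨i, I i⟩ ≤ 0)
    (hq : qform S (toVec b) = 0) : ∃ Y, IsIsotropic b Y := by
  have hform := hb.two_mul_qform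
  rw [hq, mul_zero, Finset.sum_add_distrib, Fintype.sum_sigma] at hform
  have leg_nonpos (x : Leg S) (κ : Fin (S.e x.1 x.2 - 1)) :
      b x (κ + 1) * (2 * b x (κ + 1) - b x κ - b x (κ + 2)) ≤ 0 :=
    mul_nonpos_of_nonneg_of_nonpos (hnn _ _) (by linarith [hconv x κ])
  have legs_nonpos : ∀ x ∈ Finset.univ, ∑ κ : Fin (S.e x.1 x.2 - 1),
      b x (κ + 1) * (2 * b x (κ + 1) - b x κ - b x (κ + 2)) ≤ 0 :=
    fun x _ => Finset.sum_nonpos fun κ _ => leg_nonpos x κ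
  obtain ⟨T, hT, hTsum⟩ := exists_const_on_support_of_sum_transversal_nonpos
    (w := fun i j => b ⟨i, j⟩ 0) (t := fun i j => excess b ⟨i, j⟩) hr (fun _ _ => hnn _ _)
    hb.sum_head htrans (by linarith [Finset.sum_nonpos legs_nonpos])
  have heads_zero : ∑ i, ∑ j, b ⟨i, j⟩ 0 * excess b ⟨i, j⟩ = 0 := by
    have term (i) (j : Fin (S.m i)) : b ⟨i, j⟩ 0 * excess b ⟨i, j⟩ = b ⟨i, j⟩ 0 * T i := by
      by_cases h : b ⟨i, j⟩ 0 = 0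
      · simp only [h, zero_mul]
      · rw [hT i j h]
    simp only [term, ← Finset.sum_mul, hb.sum_head, ← Finset.mul_sum, hTsum, mul_zero]
  have leg_zero (x : Leg S) (κ : Fin (S.e x.1 x.2 - 1)) :
      b x (κ + 1) * (2 * b x (κ + 1) - b x κ - b x (κ + 2)) = 0 :=
    (Finset.sum_eq_zero_iff_of_nonpos fun κ _ => leg_nonpos x κ).1
      ((Finset.sum_eq_zero_iff_of_nonpos legs_nonpos).1 (by linarith) x (Finset.mem_univ _)) κ
      (Finset.mem_univ _)
  refine ⟨fun i => offset b i - T i, fun x => ⟨hnn x, hb.terminates x, fun k hk => ?_⟩, hr,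
    hb.sum_head, fun x hx => ?_, ?_⟩
  · have hlt : k < S.e x.1 x.2 - 1 := by
      by_contra h
      exact hk (hb.terminates x _ (by omega))
    have := (mul_eq_zero.1 (leg_zero x ⟨k, hlt⟩)).resolve_left hk
    linarith
  · have := hT x.1 x.2 hx
    rw [excess] at this
    linarith
  · rw [Finset.sum_sub_distrib, sum_offset, hTsum, sub_zero]

namespace IsIsotropic

theorem isBalanced (h : IsIsotropic b Y) : IsBalanced b :=
  ⟨fun x => (h.leg x).eq_zero, h.sum_head⟩

theorem apply_zero_add_apply_zero_le_rank (h : IsIsotropic b Y) {i : Fin (S.p + 1)}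
    {j j' : Fin (S.m i)} (hne : j ≠ j') : b ⟨i, j⟩ 0 + b ⟨i, j'⟩ 0 ≤ rank b := by
  rw [← h.sum_head i, ← Finset.sum_pair (f := fun j => b ⟨i, j⟩ 0) hne]
  exact Finset.sum_le_sum_of_subset_of_nonneg (Finset.subset_univ _)
    fun j _ _ => (h.leg ⟨i, j⟩).nonneg 0

theorem eq_zero_of_ne (h : IsIsotropic b Y) {i : Fin (S.p + 1)} {j j' : Fin (S.m i)}
    (hj : b ⟨i, j⟩ 0 = rank b) (hne : j ≠ j') (k : ℕ) : b ⟨i, j'⟩ k = 0 := by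
  have := h.apply_zero_add_apply_zero_le_rank hne
  exact (h.leg _).eq_zero_of_le (le_antisymm (by linarith) ((h.leg _).nonneg 0)) (Nat.zero_le k)

theorem defect_eq_apply_one (h : IsIsotropic b Y) {i : Fin (S.p + 1)} {j : Fin (S.m i)}
    (hj : b ⟨i, j⟩ 0 = rank b) : Y i = b ⟨i, j⟩ 1 := by
  have hY := h.blockTerm_eq ⟨i, j⟩ (hj ▸ h.rank_pos.ne')
  rw [blockTerm_of_single b fun j' hne => h.eq_zero_of_ne hj hne.symm 0, hj] at hY
  linarith

theorem exists_apply_zero_ne_zero (h : IsIsotropic b Y) (i : Fin (S.p + 1)) :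
    ∃ j, b ⟨i, j⟩ 0 ≠ 0 := by
  have hsum : ∑ j, b ⟨i, j⟩ 0 ≠ 0 := (h.sum_head i).trans_ne h.rank_pos.ne'
  obtain ⟨j, -, hj⟩ := Finset.exists_ne_zero_of_sum_ne_zero hsum
  exact ⟨j, hj⟩

theorem blockTerm_le (h : IsIsotropic b Y) (x : Leg S) : blockTerm b x ≤ 2 * b x 0 := by
  have : 0 ≤ ∑ j, (dcnt S x.1 x.2 j : ℤ) * b ⟨x.1, j⟩ 0 :=
    Finset.sum_nonneg fun j _ => mul_nonneg (Nat.cast_nonneg _) ((h.leg _).nonneg 0)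
  rw [blockTerm]
  linarith [(h.leg x).nonneg 1]

/- A block index not concentrated on a single leg has two legs in the support, and the sum of their
two block terms is at most `2 * rank b`. -/
theorem rank_le_defect (h : IsIsotropic b Y) {i : Fin (S.p + 1)}
    (hi : ∀ j, b ⟨i, j⟩ 0 ≠ rank b) : rank b ≤ Y i := by
  obtain ⟨j, hj⟩ := h.exists_apply_zero_ne_zero i
  obtain ⟨j', hj', hne⟩ : ∃ j', b ⟨i, j'⟩ 0 ≠ 0 ∧ j' ≠ j := by
    by_contra! hall
    have hsingle : ∑ j', b ⟨i, j'⟩ 0 = b ⟨i, j⟩ 0 :=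
      Fintype.sum_eq_single j fun j' hne => by_contra fun h' => hne (hall j' h')
    exact hi j (hsingle.symm.trans (h.sum_head i))
  have hsum := h.apply_zero_add_apply_zero_le_rank hne
  have hle := h.blockTerm_le ⟨i, j⟩
  have hle' := h.blockTerm_le ⟨i, j'⟩
  rw [h.blockTerm_eq _ hj] at hle
  rw [h.blockTerm_eq _ hj'] at hle'
  linarith

theorem defect_nonneg (h : IsIsotropic b Y) (i : Fin (S.p + 1)) : 0 ≤ Y i := by
  by_cases hi : ∃ j, b ⟨i, j⟩ 0 = rank b
  · obtain ⟨j, hj⟩ := hi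
    exact (h.leg ⟨i, j⟩).nonneg 1 |>.trans_eq (h.defect_eq_apply_one hj).symm
  · exact h.rank_pos.le.trans (h.rank_le_defect (not_exists.1 hi))

theorem exists_dcnt_ne_zero (h : IsIsotropic b Y) {i : Fin (S.p + 1)} (hY : Y i = 2 * rank b)
    {j : Fin (S.m i)} (hj : b ⟨i, j⟩ 0 ≠ 0) : ∃ j', b ⟨i, j'⟩ 0 ≠ 0 ∧ dcnt S i j j' ≠ 0 := by
  have hlt := (h.leg ⟨i, j⟩).apply_one_lt_apply_zero (hj.lt_of_le' ((h.leg _).nonneg 0))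
  have hblock := h.blockTerm_eq ⟨i, j⟩ hj
  rw [blockTerm, hY] at hblock
  have hpos : ∑ j', (dcnt S i j j' : ℤ) * b ⟨i, j'⟩ 0 ≠ 0 := by
    linarith [(h.leg ⟨i, j⟩).nonneg 0]
  obtain ⟨j', -, hj'⟩ := Finset.exists_ne_zero_of_sum_ne_zero hpos
  exact ⟨j', right_ne_zero_of_mul hj', Nat.cast_ne_zero.1 (left_ne_zero_of_mul hj')⟩

end IsIsotropic

end Isotropic

section Moves

variable {f : Chain S}

/-- The chain with the value at position `k` of the leg `x` replaced by `c`. -/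
def setCoord (f : Chain S) (x : Leg S) (k : ℕ) (c : ℤ) : Chain S :=
  fun y l => if y = x ∧ l = k then c else f y l

theorem setCoord_of_ne (f : Chain S) {x y : Leg S} (h : y ≠ x) (k : ℕ) (c : ℤ) :
    setCoord f x k c y = f y :=
  funext fun _ => if_neg fun h' => h h'.1

theorem weylEquiv_setCoord (v : V S) {c : ℤ} (hc : c = toVec f v - bform S (toVec f) (eps S v)) :
    WeylEquiv (toVec f) (toVec (setCoord f (position v).1 (position v).2 c)) :=
  .of_eq_sub_bform v
    (fun _ hw => if_neg fun h => hw (position_injective (Prod.ext h.1 h.2)))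
    ((if_pos ⟨rfl, rfl⟩).trans hc)

theorem Terminates.weylEquiv_setCoord_head (hf : Terminates f) {x : Leg S} (hx : Iirr S x.1) {c : ℤ}
    (hc : c = f x 0 - (blockTerm f x - link f x.1)) :
    WeylEquiv (toVec f) (toVec (setCoord f x 0 c)) :=
  weylEquiv_setCoord (vI S ⟨x.1, hx⟩ x.2)
    (hc.trans (congrArg (f x 0 - ·) (hf.bform_vI ⟨x.1, hx⟩ x.2).symm))

theorem Terminates.weylEquiv_setCoord_succ (hf : Terminates f) {x : Leg S} {k : ℕ}
    (hk : k < S.e x.1 x.2 - 1) {c : ℤ}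
    (hc : c = f x (k + 1) - (2 * f x (k + 1) -
      (if k = 0 ∧ ¬Iirr S x.1 then rank f else f x k) - f x (k + 2))) :
    WeylEquiv (toVec f) (toVec (setCoord f x (k + 1) c)) :=
  weylEquiv_setCoord (Sum.inr ⟨x.1, x.2, k, hk⟩)
    (hc.trans (congrArg (f x (k + 1) - ·) (hf.bform_inr x ⟨k, hk⟩).symm))

theorem toVec_setCoord_zero_of_not_iirr (f : Chain S) {x : Leg S} (hx : ¬Iirr S x.1) (c : ℤ) :
    toVec (setCoord f x 0 c) = toVec f := by
  funext a
  refine if_neg fun h => ?_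
  rcases a with ⟨i, j⟩ | ⟨i, j, κ⟩
  · exact hx (h.1 ▸ i.2)
  · exact Nat.succ_ne_zero _ h.2

/-- The chain with its first coordinate removed on each leg of `U`. -/
def shiftLegs (f : Chain S) (U : Finset (Leg S)) : Chain S :=
  fun x k => if x ∈ U then f x (k + 1) else f x k

/-- An intermediate stage of `shiftLegs f {x}`, at which only the values at the first `n` positions
of the leg have been replaced. -/
def shiftUpTo (f : Chain S) (x : Leg S) (n : ℕ) : Chain S :=
  fun y k => if y = x ∧ k < n then f y (k + 1) else f y k

theorem shiftUpTo_zero (f : Chain S) (x : Leg S) : shiftUpTo f x 0 = f :=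
  funext fun _ => funext fun _ => if_neg fun h => Nat.not_lt_zero _ h.2

theorem shiftUpTo_succ (f : Chain S) (x : Leg S) (n : ℕ) :
    shiftUpTo f x (n + 1) = setCoord (shiftUpTo f x n) x n (f x (n + 1)) := by
  funext y k
  simp only [shiftUpTo, setCoord]
  grind

theorem shiftUpTo_apply_of_le (f : Chain S) (x : Leg S) {n k : ℕ} (h : n ≤ k) :
    shiftUpTo f x n x k = f x k := if_neg fun h' => h'.2.not_ge h

theorem shiftUpTo_succ_apply (f : Chain S) (x : Leg S) (n : ℕ) :
    shiftUpTo f x (n + 1) x n = f x (n + 1) := if_pos ⟨rfl, n.lt_succ_self⟩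

theorem terminates_shiftUpTo (hf : Terminates f) (x : Leg S) (n : ℕ) :
    Terminates (shiftUpTo f x n) := by
  intro y k hk
  rw [shiftUpTo]
  split_ifs
  exacts [hf y _ (by omega), hf y k hk]

theorem shiftUpTo_eq_shiftLegs (hf : Terminates f) (x : Leg S) :
    shiftUpTo f x (S.e x.1 x.2) = shiftLegs f {x} := by
  funext y k
  simp only [shiftUpTo, shiftLegs, Finset.mem_singleton]
  by_cases hy : y = x
  · subst hy
    by_cases hk : k < S.e y.1 y.2
    · simp only [hk, and_self]
    · simp only [hk, and_false, if_false, if_true, hf y k (by omega), hf y (k + 1) (by omega)]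
  · simp only [hy, false_and]

/- Once the value at a position equals the next one, the reflection at the next position copies the
value after that; thus the first reflection starts a cascade along the leg. -/
theorem Terminates.weylEquiv_shiftUpTo (hf : Terminates f) {x : Leg S}
    (hirr : Iirr S x.1 → blockTerm f x - link f x.1 = f x 0 - f x 1)
    (hreg : ¬Iirr S x.1 → f x 1 = rank f) (n : ℕ) (hn : n ≤ S.e x.1 x.2) :
    WeylEquiv (toVec f) (toVec (shiftUpTo f x n)) := by
  induction n with
  | zero => rw [shiftUpTo_zero]; exact .refl _
  | succ n ih =>
    refine (ih (by omega)).trans ?_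
    rw [shiftUpTo_succ]
    rcases n with - | k
    · rw [shiftUpTo_zero]
      by_cases hx : Iirr S x.1
      · exact hf.weylEquiv_setCoord_head hx (by linarith [hirr hx])
      · rw [toVec_setCoord_zero_of_not_iirr f hx]
        exact .refl _
    · refine (terminates_shiftUpTo hf x (k + 1)).weylEquiv_setCoord_succ (by omega) ?_
      have previous : (if k = 0 ∧ ¬Iirr S x.1 then rank (shiftUpTo f x (k + 1))
          else shiftUpTo f x (k + 1) x k) = f x (k + 1) := by
        split_ifs with h
        · have h0 (j) : (⟨0, j⟩ : Leg S) ≠ x := fun e => h.2 (e ▸ iirr_zero)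
          rw [h.1, hreg h.2, rank, rank]
          exact Finset.sum_congr rfl fun j _ => if_neg fun e => h0 j e.1
        · exact shiftUpTo_succ_apply f x k
      rw [previous, shiftUpTo_apply_of_le f x le_rfl, shiftUpTo_apply_of_le f x (by omega)]
      ring

theorem Terminates.weylEquiv_shiftLegs_singleton (hf : Terminates f) {x : Leg S}
    (hirr : Iirr S x.1 → blockTerm f x - link f x.1 = f x 0 - f x 1)
    (hreg : ¬Iirr S x.1 → f x 1 = rank f) :
    WeylEquiv (toVec f) (toVec (shiftLegs f {x})) :=
  shiftUpTo_eq_shiftLegs hf x ▸ hf.weylEquiv_shiftUpTo hirr hreg _ le_rfl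

theorem terminates_shiftLegs (hf : Terminates f) (U : Finset (Leg S)) :
    Terminates (shiftLegs f U) := by
  intro x k hk
  rw [shiftLegs]
  split_ifs
  exacts [hf x _ (by omega), hf x k hk]

theorem shiftLegs_insert (f : Chain S) {x : Leg S} {U : Finset (Leg S)} (hx : x ∉ U) :
    shiftLegs f (insert x U) = shiftLegs (shiftLegs f U) {x} := by
  funext y k
  simp only [shiftLegs, Finset.mem_insert, Finset.mem_singleton]
  grind

theorem shiftLegs_of_mem (f : Chain S) {x : Leg S} {U : Finset (Leg S)} (hx : x ∈ U) (k : ℕ) :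
    shiftLegs f U x k = f x (k + 1) := if_pos hx

theorem shiftLegs_of_notMem (f : Chain S) {x : Leg S} {U : Finset (Leg S)} (hx : x ∉ U) :
    shiftLegs f U x = f x := funext fun _ => if_neg hx

end Moves

section FundamentalChains

variable {f : Chain S}

/-- A chain all of whose legs are harmonic, where the leg of a regular index `i` may be prolonged by
the vector space of dimension `rank f` which is the direct sum of those at the vertices `[0,j]`. -/
structure IsHarmonic (f : Chain S) : Prop where
  leg : ∀ x, IsHarmonicLeg (S.e x.1 x.2) (f x)
  anchored : ∀ x, ¬Iirr S x.1 → f x 1 ≠ 0 → f x 0 = rank f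

theorem IsHarmonic.terminates (h : IsHarmonic f) : Terminates f := fun x => (h.leg x).eq_zero

theorem IsHarmonic.toVec_nonneg (h : IsHarmonic f) (a : V S) : 0 ≤ toVec f a := (h.leg _).nonneg _

theorem IsHarmonic.attached_nonneg (h : IsHarmonic f) (i : Fin (S.p + 1)) : 0 ≤ attached f i := by
  rw [attached]
  split_ifs
  exacts [le_rfl, Finset.sum_nonneg fun _ _ => (h.leg _).nonneg _,
    Finset.sum_nonneg fun _ _ => (h.leg _).nonneg _]

theorem IsHarmonic.bform_eps_nonpos (h : IsHarmonic f)
    (hhead : ∀ x, Iirr S x.1 → f x 0 ≠ 0 → blockTerm f x ≤ link f x.1) (a : V S) :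
    bform S (toVec f) (eps S a) ≤ 0 := by
  by_cases ha : toVec f a = 0
  · exact bform_eps_nonpos_of_apply_eq_zero h.toVec_nonneg ha
  rcases a with ⟨i, j⟩ | ⟨i, j, κ⟩
  · exact (h.terminates.bform_vI i j).trans_le (sub_nonpos.2 (hhead ⟨i.1, j⟩ i.2 ha))
  · rw [h.terminates.bform_inr ⟨i, j⟩ κ]
    have hk : f ⟨i, j⟩ (κ + 1) ≠ 0 := ha
    have previous : (if (κ : ℕ) = 0 ∧ ¬Iirr S i then rank f else f ⟨i, j⟩ κ) = f ⟨i, j⟩ κ := by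
      split_ifs with hreg
      · rw [hreg.1] at hk ⊢
        exact (h.anchored ⟨i, j⟩ hreg.2 hk).symm
      · rfl
    rw [previous, (h.leg ⟨i, j⟩).harmonic κ hk]
    linarith

/-- Two vertices lie in the same component of the support of the vector of a chain. -/
def SuppConnected (f : Chain S) : V S → V S → Prop :=
  Relation.ReflTransGen fun a a' =>
    0 < edgeCount a a' ∧ a ∈ supp S (toVec f) ∧ a' ∈ supp S (toVec f)

theorem SuppConnected.symm {a a' : V S} (h : SuppConnected f a a') : SuppConnected f a' a := by
  induction h with
  | refl => exact .refl
  | tail _ hb ih => exact ih.head ⟨edgeCount_comm _ _ ▸ hb.1, hb.2.2, hb.2.1⟩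

theorem SuppConnected.trans {a a' a'' : V S} (h : SuppConnected f a a')
    (h' : SuppConnected f a' a'') : SuppConnected f a a'' :=
  Relation.ReflTransGen.trans h h'

theorem SuppConnected.of_edge {a a' : V S} (ha : toVec f a ≠ 0) (ha' : toVec f a' ≠ 0)
    (h : edgeCount a a' ≠ 0) : SuppConnected f a a' :=
  .single ⟨Nat.pos_of_ne_zero h, ha, ha'⟩

theorem SuppConnected.cross (i : {i // Iirr S i}) (hi : i.1 ≠ 0) {j : Fin (S.m 0)}
    {j' : Fin (S.m i.1)} (hj : f ⟨0, j⟩ 0 ≠ 0) (hj' : f ⟨i.1, j'⟩ 0 ≠ 0) :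
    SuppConnected f (v0 S j) (vI S i j') := by
  refine .of_edge hj hj' ?_
  have hne : i0 S ≠ i := fun h => hi (congrArg Subtype.val h).symm
  have h0 : (i0 S).1 = 0 := rfl
  exact ((edgeCount_vI_vI_of_ne hne j j').trans (if_pos (Or.inl h0))).trans_ne one_ne_zero

theorem SuppConnected.anchor {x : Leg S} (hx : ¬Iirr S x.1) {j : Fin (S.m 0)}
    {κ : Fin (S.e x.1 x.2 - 1)} (hκ : (κ : ℕ) = 0) (h1 : f x 1 ≠ 0) (hj : f ⟨0, j⟩ 0 ≠ 0) :
    SuppConnected f (v0 S j) (Sum.inr ⟨x.1, x.2, κ⟩) := by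
  refine .of_edge hj ?_ ?_
  · rw [toVec_inr, hκ]
    exact h1
  · have h0 : (i0 S).1 = 0 := rfl
    have := edgeCount_vI_inr (i0 S) j x κ
    rw [if_pos hκ, if_pos (And.intro hx h0)] at this
    exact this.trans_ne (Nat.succ_ne_zero _)

theorem IsHarmonic.exists_suppConnected_head (h : IsHarmonic f) {a : V S} (ha : toVec f a ≠ 0) :
    ∃ i j, f ⟨i.1, j⟩ 0 ≠ 0 ∧ SuppConnected f (vI S i j) a := by
  rcases a with ⟨i, j⟩ | ⟨i, j, κ, hκ⟩
  · exact ⟨i, j, ha, .refl⟩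
  induction κ with
  | zero =>
    have h0 : f ⟨i, j⟩ 0 ≠ 0 := fun h0 => ha ((h.leg ⟨i, j⟩).eq_zero_of_le h0 (Nat.zero_le _))
    by_cases hi : Iirr S i
    · refine ⟨⟨i, hi⟩, j, h0, .of_edge h0 ha ?_⟩
      rw [edgeCount_vI_inr ⟨i, hi⟩ j ⟨i, j⟩, if_pos rfl, if_pos rfl]
      omega
    · have hrank : rank f ≠ 0 := h.anchored ⟨i, j⟩ hi ha ▸ h0
      obtain ⟨j', -, hj'⟩ := Finset.exists_ne_zero_of_sum_ne_zero hrank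
      exact ⟨i0 S, j', hj', .anchor (x := ⟨i, j⟩) hi rfl ha hj'⟩
  | succ κ ih =>
    have hprev : toVec f (Sum.inr ⟨i, j, κ, Nat.lt_of_succ_lt hκ⟩) ≠ 0 :=
      fun h0 => ha ((h.leg ⟨i, j⟩).eq_zero_of_le h0 (Nat.le_succ _))
    obtain ⟨i', j', hj', hconn⟩ := ih _ hprev
    refine ⟨i', j', hj', hconn.trans (.of_edge hprev ha ?_)⟩
    rw [edgeCount_inr_inr ⟨i, j⟩ ⟨i, j⟩ ⟨κ, Nat.lt_of_succ_lt hκ⟩ ⟨κ + 1, hκ⟩, if_pos rfl,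
      if_pos rfl]
    exact Nat.ne_of_gt (Nat.add_pos_left one_pos _)

theorem IsHarmonic.connSupp_of_heads (h : IsHarmonic f)
    (hheads : ∀ i j i' j', f ⟨i.1, j⟩ 0 ≠ 0 → f ⟨i'.1, j'⟩ 0 ≠ 0 →
      SuppConnected f (vI S i j) (vI S i' j')) : connSupp S (toVec f) := by
  intro a ha a' ha'
  obtain ⟨i, j, hj, hconn⟩ := h.exists_suppConnected_head ha
  obtain ⟨i', j', hj', hconn'⟩ := h.exists_suppConnected_head ha'
  exact (hconn.symm.trans (hheads i j i' j' hj hj')).trans hconn'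

theorem IsHarmonic.connSupp_of_attached_ne_zero (h : IsHarmonic f) (hr : rank f ≠ 0)
    {i : Fin (S.p + 1)} (hi : attached f i ≠ 0) : connSupp S (toVec f) := by
  have center : ∃ a, ∀ j, f ⟨0, j⟩ 0 ≠ 0 → SuppConnected f (v0 S j) a := by
    have h0 : i ≠ 0 := fun h0 => hi (if_pos h0)
    rw [attached, if_neg h0] at hi
    split_ifs at hi with hirr
    · obtain ⟨j', -, hj'⟩ := Finset.exists_ne_zero_of_sum_ne_zero hi
      exact ⟨vI S ⟨i, hirr⟩ j', fun j hj => .cross ⟨i, hirr⟩ h0 hj hj'⟩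
    · obtain ⟨j', -, hj'⟩ := Finset.exists_ne_zero_of_sum_ne_zero hi
      have hlt : 0 < S.e i j' - 1 := by
        by_contra hlt
        exact hj' (h.terminates ⟨i, j'⟩ 1 (show S.e i j' ≤ 1 by omega))
      exact ⟨Sum.inr ⟨i, j', 0, hlt⟩, fun j hj => .anchor (x := ⟨i, j'⟩) hirr rfl hj' hj⟩
  obtain ⟨a, ha⟩ := center
  obtain ⟨j₀, -, hj₀⟩ := Finset.exists_ne_zero_of_sum_ne_zero hr
  have to_center (i) (j) (hj : f ⟨i.1, j⟩ 0 ≠ 0) : SuppConnected f (vI S i j) a := by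
    by_cases h0 : i.1 = 0
    · obtain rfl : i = i0 S := Subtype.ext h0
      exact ha j hj
    · exact (SuppConnected.cross i h0 hj₀ hj).symm.trans (ha j₀ hj₀)
  exact h.connSupp_of_heads fun i j i' j' hj hj' =>
    (to_center i j hj).trans (to_center i' j' hj').symm

theorem SuppConnected.block {i : {i // Iirr S i}}
    (hdcnt : ∀ j, f ⟨i.1, j⟩ 0 ≠ 0 → ∃ j', f ⟨i.1, j'⟩ 0 ≠ 0 ∧ dcnt S i.1 j j' ≠ 0)
    {j j' : Fin (S.m i.1)} (hj : f ⟨i.1, j⟩ 0 ≠ 0) (hj' : f ⟨i.1, j'⟩ 0 ≠ 0) :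
    SuppConnected f (vI S i j) (vI S i j') := by
  have edge {j j'} (hj : f ⟨i.1, j⟩ 0 ≠ 0) (hj' : f ⟨i.1, j'⟩ 0 ≠ 0) (hd : dcnt S i.1 j j' ≠ 0) :
      SuppConnected f (vI S i j) (vI S i j') :=
    .of_edge hj hj' (edgeCount_vI_vI i j j' ▸ hd)
  by_cases hd : dcnt S i.1 j j' = 0
  · obtain ⟨k, hk, hjk⟩ := hdcnt j hj
    exact (edge hj hk hjk).trans
      (edge hj' hk fun hjk' => hjk (dcnt_eq_zero_trans hd hjk')).symm
  · exact edge hj hj' hd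

theorem IsHarmonic.connSupp_of_single_block (h : IsHarmonic f) {i : Fin (S.p + 1)}
    (hsingle : ∀ x, Iirr S x.1 → f x 0 ≠ 0 → x.1 = i)
    (hdcnt : ∀ j, f ⟨i, j⟩ 0 ≠ 0 → ∃ j', f ⟨i, j'⟩ 0 ≠ 0 ∧ dcnt S i j j' ≠ 0) :
    connSupp S (toVec f) := by
  refine h.connSupp_of_heads fun k j k' j' hj hj' => ?_
  obtain rfl : k.1 = i := hsingle ⟨k.1, j⟩ k.2 hj
  obtain rfl : k' = k := Subtype.ext (hsingle ⟨k'.1, j'⟩ k'.2 hj')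
  exact .block hdcnt hj hj'

end FundamentalChains

section Collapse

variable {b f : Chain S} {Y : Fin (S.p + 1) → ℤ}

theorem isHarmonicLeg_shiftLegs (hf : ∀ x, IsHarmonicLeg (S.e x.1 x.2) (f x)) (U : Finset (Leg S))
    (x : Leg S) : IsHarmonicLeg (S.e x.1 x.2) (shiftLegs f U x) := by
  by_cases hx : x ∈ U
  · rw [funext (shiftLegs_of_mem f hx)]
    exact (hf x).tail
  · rw [shiftLegs_of_notMem f hx]
    exact hf x

theorem rank_shiftLegs {U : Finset (Leg S)} (hU : ∀ x ∈ U, x.1 ≠ 0) :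
    rank (shiftLegs f U) = rank f :=
  Finset.sum_congr rfl fun _ _ => congrFun (shiftLegs_of_notMem f fun hx => hU _ hx rfl) 0

theorem blockTerm_congr {f f' : Chain S} {x : Leg S} (h : ∀ j, f ⟨x.1, j⟩ = f' ⟨x.1, j⟩) :
    blockTerm f x = blockTerm f' x := by
  simp only [blockTerm, h]

theorem IsIsotropic.apply_eq_zero_of_ne (h : IsIsotropic b Y) {x y : Leg S} (hx : b x 0 = rank b)
    (hxy : x.1 = y.1) (hne : x ≠ y) (k : ℕ) : b y k = 0 := by
  obtain ⟨i, j⟩ := x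
  obtain ⟨i', j'⟩ := y
  obtain rfl : i = i' := hxy
  exact h.eq_zero_of_ne hx (fun hj => hne (hj ▸ rfl)) k

/-- The legs `[i,j]` with `i ∈ I_irr`, `i ≠ 0`, such that `[i,j]` is the only block of index `i` in
the support. -/
def concentratedLegs (b : Chain S) : Finset (Leg S) :=
  {x | x.1 ≠ 0 ∧ Iirr S x.1 ∧ b x 0 = rank b}

theorem mem_concentratedLegs {x : Leg S} :
    x ∈ concentratedLegs b ↔ x.1 ≠ 0 ∧ Iirr S x.1 ∧ b x 0 = rank b := by
  rw [concentratedLegs, Finset.mem_filter_univ]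

theorem IsIsotropic.weylEquiv_shiftLegs (h : IsIsotropic b Y) {U : Finset (Leg S)}
    (hU : U ⊆ concentratedLegs b) : WeylEquiv (toVec b) (toVec (shiftLegs b U)) := by
  induction U using Finset.induction_on with
  | empty => exact .refl _
  | insert x U hx ih =>
    have hne : ∀ y ∈ U, y.1 ≠ 0 :=
      fun y hy => (mem_concentratedLegs.1 (hU (Finset.mem_insert_of_mem hy))).1
    obtain ⟨h0, hirr, hr⟩ := mem_concentratedLegs.1 (hU (Finset.mem_insert_self x U))
    have single (j) (hj : j ≠ x.2) : shiftLegs b U ⟨x.1, j⟩ 0 = 0 := by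
      rw [shiftLegs, h.eq_zero_of_ne hr hj.symm, h.eq_zero_of_ne hr hj.symm, ite_self]
    rw [shiftLegs_insert b hx]
    refine (ih fun y hy => hU (Finset.mem_insert_of_mem hy)).trans
      ((terminates_shiftLegs h.isBalanced.terminates U).weylEquiv_shiftLegs_singleton
        (fun _ => ?_) (absurd hirr))
    rw [blockTerm_of_single _ single, link, if_neg h0, rank_shiftLegs hne,
      shiftLegs_of_notMem b hx, hr]
    ring

/-- The chain obtained by removing the first coordinate `rank b` of each leg of
`concentratedLegs b`. -/
def collapse (b : Chain S) : Chain S := shiftLegs b (concentratedLegs b)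

theorem collapse_of_mem {x : Leg S} (hx : x ∈ concentratedLegs b) (k : ℕ) :
    collapse b x k = b x (k + 1) := shiftLegs_of_mem b hx k

theorem collapse_of_notMem {x : Leg S} (hx : x ∉ concentratedLegs b) : collapse b x = b x :=
  shiftLegs_of_notMem b hx

theorem collapse_of_not_iirr {x : Leg S} (hx : ¬Iirr S x.1) : collapse b x = b x :=
  collapse_of_notMem fun h => hx (mem_concentratedLegs.1 h).2.1

theorem collapse_of_eq_zero {x : Leg S} (hx : x.1 = 0) : collapse b x = b x :=
  collapse_of_notMem fun h => (mem_concentratedLegs.1 h).1 hx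

theorem collapse_of_forall_ne {i : Fin (S.p + 1)} (hi : ∀ j, b ⟨i, j⟩ 0 ≠ rank b)
    (j : Fin (S.m i)) : collapse b ⟨i, j⟩ = b ⟨i, j⟩ :=
  collapse_of_notMem fun h => hi j (mem_concentratedLegs.1 h).2.2

theorem rank_collapse (b : Chain S) : rank (collapse b) = rank b :=
  rank_shiftLegs fun _ hx => (mem_concentratedLegs.1 hx).1

theorem collapse_apply_eq_zero {x : Leg S} (hx : ∀ k, b x k = 0) (k : ℕ) :
    collapse b x k = 0 := by
  rw [collapse, shiftLegs, hx, hx, ite_self]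

namespace IsIsotropic

theorem iirr_of_forall_ne (h : IsIsotropic b Y) {i : Fin (S.p + 1)}
    (hi : ∀ j, b ⟨i, j⟩ 0 ≠ rank b) : Iirr S i := by
  obtain ⟨j, -⟩ := h.exists_apply_zero_ne_zero i
  by_contra hirr
  exact hi j (h.isBalanced.apply_zero_of_not_iirr (x := ⟨i, j⟩) hirr)

theorem isHarmonic_collapse (h : IsIsotropic b Y) : IsHarmonic (collapse b) where
  leg := isHarmonicLeg_shiftLegs h.leg _
  anchored x hx _ := by
    rw [collapse_of_not_iirr hx, rank_collapse, h.isBalanced.apply_zero_of_not_iirr hx]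

theorem blockTerm_collapse_of_mem (h : IsIsotropic b Y) {x : Leg S}
    (hx : x ∈ concentratedLegs b) : blockTerm (collapse b) x = 2 * b x 1 - b x 2 := by
  have hr := (mem_concentratedLegs.1 hx).2.2
  rw [blockTerm_of_single _ fun j hj => collapse_apply_eq_zero (h.eq_zero_of_ne hr hj.symm) 0,
    collapse_of_mem hx, collapse_of_mem hx]

theorem blockTerm_collapse_of_notMem (h : IsIsotropic b Y) {x : Leg S}
    (hx : ∀ j, ⟨x.1, j⟩ ∉ concentratedLegs b) (hx0 : b x 0 ≠ 0) :
    blockTerm (collapse b) x = 2 * rank b - Y x.1 :=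
  (blockTerm_congr fun j => collapse_of_notMem (hx j)).trans (h.blockTerm_eq x hx0)

theorem attached_collapse (h : IsIsotropic b Y) {x : Leg S} (hx : b x 0 = rank b)
    (h0 : x.1 ≠ 0) : attached (collapse b) x.1 = Y x.1 := by
  rw [h.defect_eq_apply_one hx]
  by_cases hirr : Iirr S x.1
  · rw [attached, if_neg h0, if_pos hirr, Fintype.sum_eq_single x.2 fun j hj =>
      collapse_apply_eq_zero (h.eq_zero_of_ne hx hj.symm) 0]
    exact collapse_of_mem (mem_concentratedLegs.2 ⟨h0, hirr, hx⟩) 0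
  · rw [attached_of_not_iirr hirr, collapse_of_not_iirr hirr]

theorem attached_collapse_of_forall_ne (h : IsIsotropic b Y) {i : Fin (S.p + 1)}
    (hi : ∀ j, b ⟨i, j⟩ 0 ≠ rank b) (h0 : i ≠ 0) : attached (collapse b) i = rank b := by
  rw [attached, if_neg h0, if_pos (h.iirr_of_forall_ne hi)]
  simp only [collapse_of_forall_ne hi, h.sum_head]

end IsIsotropic

theorem attached_zero (f : Chain S) : attached f 0 = 0 := if_pos rfl

theorem IsHarmonic.fund_toVec (hf : IsHarmonic f)
    (hhead : ∀ x, Iirr S x.1 → f x 0 ≠ 0 → blockTerm f x ≤ link f x.1)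
    (hconn : connSupp S (toVec f)) {i : Fin (S.p + 1)} (hi : Iirr S i) {j : Fin (S.m i)}
    (hj : f ⟨i, j⟩ 0 ≠ 0) : fund S (toVec f) :=
  ⟨fun h => hj (congrFun h (vI S ⟨i, hi⟩ j)), hf.toVec_nonneg, hconn, hf.bform_eps_nonpos hhead⟩

end Collapse

section TightCase

variable {b : Chain S} {Y : Fin (S.p + 1) → ℤ}

namespace IsIsotropic

theorem attached_collapse_of_tight (h : IsIsotropic b Y)
    (htight : ∀ i ≠ 0, (∀ j, b ⟨i, j⟩ 0 ≠ rank b) → Y i = rank b) {i : Fin (S.p + 1)}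
    (h0 : i ≠ 0) : attached (collapse b) i = Y i := by
  by_cases hi : ∃ j, b ⟨i, j⟩ 0 = rank b
  · obtain ⟨j, hj⟩ := hi
    exact h.attached_collapse hj h0
  · rw [h.attached_collapse_of_forall_ne (not_exists.1 hi) h0, htight i h0 (not_exists.1 hi)]

theorem sum_attached_collapse_of_tight (h : IsIsotropic b Y)
    (htight : ∀ i ≠ 0, (∀ j, b ⟨i, j⟩ 0 ≠ rank b) → Y i = rank b) :
    ∑ i, attached (collapse b) i = 2 * rank b - Y 0 := by
  have hdiff : ∑ i, (attached (collapse b) i - Y i) = attached (collapse b) 0 - Y 0 :=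
    Fintype.sum_eq_single 0 fun i h0 => sub_eq_zero.2 (h.attached_collapse_of_tight htight h0)
  rw [Finset.sum_sub_distrib, h.sum_defect, attached_zero] at hdiff
  linarith

theorem blockTerm_collapse_le_link_of_tight (h : IsIsotropic b Y)
    (htight : ∀ i ≠ 0, (∀ j, b ⟨i, j⟩ 0 ≠ rank b) → Y i = rank b) {x : Leg S}
    (hx : Iirr S x.1) (hx0 : collapse b x 0 ≠ 0) :
    blockTerm (collapse b) x ≤ link (collapse b) x.1 := by
  by_cases h0 : x.1 = 0
  · have hnot (j) : ⟨x.1, j⟩ ∉ concentratedLegs b := fun hj => (mem_concentratedLegs.1 hj).1 h0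
    rw [collapse_of_eq_zero h0] at hx0
    rw [h.blockTerm_collapse_of_notMem hnot hx0, link, if_pos h0,
      h.sum_attached_collapse_of_tight htight, h0]
  rw [link, if_neg h0, rank_collapse]
  by_cases hconc : ∃ j, b ⟨x.1, j⟩ 0 = rank b
  · obtain ⟨j, hj⟩ := hconc
    obtain hxj : ⟨x.1, j⟩ = x := by
      by_contra hne
      exact hx0 (collapse_apply_eq_zero (h.apply_eq_zero_of_ne (y := x) hj rfl hne) 0)
    have hmem : x ∈ concentratedLegs b := mem_concentratedLegs.2 ⟨h0, hx, hxj ▸ hj⟩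
    rw [collapse_of_mem hmem] at hx0
    rw [h.blockTerm_collapse_of_mem hmem]
    linarith [(h.leg x).harmonic 0 hx0, hxj ▸ hj]
  · have hne := not_exists.1 hconc
    have hnot (j) : ⟨x.1, j⟩ ∉ concentratedLegs b := fun hj => hne j (mem_concentratedLegs.1 hj).2.2
    rw [collapse_of_notMem (hnot x.2)] at hx0
    rw [h.blockTerm_collapse_of_notMem hnot hx0, htight x.1 h0 hne]
    linarith

theorem connSupp_collapse_of_tight (h : IsIsotropic b Y)
    (htight : ∀ i ≠ 0, (∀ j, b ⟨i, j⟩ 0 ≠ rank b) → Y i = rank b) :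
    connSupp S (toVec (collapse b)) := by
  have hf := h.isHarmonic_collapse
  by_cases hattached : ∃ i, attached (collapse b) i ≠ 0
  · obtain ⟨i, hi⟩ := hattached
    exact hf.connSupp_of_attached_ne_zero ((rank_collapse b).trans_ne h.rank_pos.ne') hi
  simp only [not_exists, not_not] at hattached
  refine hf.connSupp_of_single_block (i := 0) (fun x hx hx0 => ?_) fun j hj => ?_
  · by_contra h0
    have hsum := hattached x.1
    rw [attached, if_neg h0, if_pos hx,
      Finset.sum_eq_zero_iff_of_nonneg fun j _ => (hf.leg ⟨x.1, j⟩).nonneg 0] at hsum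
    exact hx0 (hsum x.2 (Finset.mem_univ _))
  · have hY : Y 0 = 2 * rank b := by
      rw [← sub_eq_zero, ← neg_eq_zero, neg_sub, ← h.sum_attached_collapse_of_tight htight]
      exact Finset.sum_eq_zero fun i _ => hattached i
    simp only [collapse_of_eq_zero] at hj ⊢
    exact h.exists_dcnt_ne_zero hY hj

theorem fund_collapse_of_tight (h : IsIsotropic b Y)
    (htight : ∀ i ≠ 0, (∀ j, b ⟨i, j⟩ 0 ≠ rank b) → Y i = rank b) :
    fund S (toVec (collapse b)) := by
  obtain ⟨j, hj⟩ := h.exists_apply_zero_ne_zero 0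
  rw [← collapse_of_eq_zero (b := b) (x := ⟨0, j⟩) rfl] at hj
  exact h.isHarmonic_collapse.fund_toVec
    (fun x hx => h.blockTerm_collapse_le_link_of_tight htight hx)
    (h.connSupp_collapse_of_tight htight) iirr_zero hj

end IsIsotropic

end TightCase

section DominantCase

variable {b : Chain S} {Y : Fin (S.p + 1) → ℤ} {i₁ : Fin (S.p + 1)} {j₀ : Fin (S.m 0)} {x₂ : Leg S}

/-- The shape of an isotropic chain when some `i₁ ≠ 0` that has several blocks in the support
satisfies `Y i₁ > rank b`. Then `[0,j₀]` is the only block of index `0` in the support, and the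
remaining value of `Y` lives on one further leg `x₂`, possibly that of `[0,j₀]`. -/
structure HasDominantIndex (b : Chain S) (Y : Fin (S.p + 1) → ℤ) (i₁ : Fin (S.p + 1))
    (j₀ : Fin (S.m 0)) (x₂ : Leg S) : Prop extends IsIsotropic b Y where
  index_ne_zero : i₁ ≠ 0
  apply_ne_rank : ∀ j, b ⟨i₁, j⟩ 0 ≠ rank b
  center : b ⟨0, j₀⟩ 0 = rank b
  partner : b x₂ 0 = rank b
  defect_add_defect : Y i₁ + Y x₂.1 = 2 * rank b

/-- The chain obtained from `collapse b` by lowering the dimension at `[0,j₀]` to `b x₂ 1` and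
removing the first coordinate of the leg `x₂`. -/
def pivot (b : Chain S) (j₀ : Fin (S.m 0)) (x₂ : Leg S) : Chain S :=
  shiftLegs (setCoord (collapse b) ⟨0, j₀⟩ 0 (b x₂ 1)) {x₂}

theorem shiftLegs_setCoord_zero (f : Chain S) (x : Leg S) (c : ℤ) :
    shiftLegs (setCoord f x 0 c) {x} = shiftLegs f {x} := by
  funext y k
  simp only [shiftLegs, setCoord, Finset.mem_singleton]
  grind

theorem terminates_setCoord_zero {f : Chain S} (hf : Terminates f) (x : Leg S) (c : ℤ) :
    Terminates (setCoord f x 0 c) := fun y k hk =>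
  (if_neg fun h => ((S.he y.1 y.2).trans_le hk).ne' h.2).trans (hf y k hk)

namespace HasDominantIndex

theorem partner_ne (h : HasDominantIndex b Y i₁ j₀ x₂) : x₂.1 ≠ i₁ := by
  rintro rfl
  exact h.apply_ne_rank x₂.2 h.partner

theorem defect_partner (h : HasDominantIndex b Y i₁ j₀ x₂) : Y x₂.1 = b x₂ 1 :=
  h.defect_eq_apply_one h.partner

theorem defect_index (h : HasDominantIndex b Y i₁ j₀ x₂) : Y i₁ = 2 * rank b - b x₂ 1 := by
  linarith [h.defect_add_defect, h.defect_partner]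

theorem defect_eq_zero (h : HasDominantIndex b Y i₁ j₀ x₂) {i : Fin (S.p + 1)} (h1 : i ≠ i₁)
    (h2 : i ≠ x₂.1) : Y i = 0 := by
  have hsum : ∑ i ∈ {i₁, x₂.1}ᶜ, Y i = 0 := by
    have := Finset.sum_add_sum_compl {i₁, x₂.1} Y
    rw [Finset.sum_pair h.partner_ne.symm, h.sum_defect, h.defect_add_defect] at this
    linarith
  exact (Finset.sum_eq_zero_iff_of_nonneg fun i _ => h.defect_nonneg i).1 hsum i (by simp [h1, h2])

theorem exists_eq_rank (h : HasDominantIndex b Y i₁ j₀ x₂) {i : Fin (S.p + 1)} (h1 : i ≠ i₁) :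
    ∃ j, b ⟨i, j⟩ 0 = rank b := by
  by_cases h2 : i = x₂.1
  · subst h2
    exact ⟨x₂.2, h.partner⟩
  · by_contra hi
    have := h.rank_le_defect (not_exists.1 hi)
    rw [h.defect_eq_zero h1 h2] at this
    exact this.not_gt h.rank_pos

theorem apply_one_eq_zero (h : HasDominantIndex b Y i₁ j₀ x₂) {x : Leg S} (hx : b x 0 = rank b)
    (h2 : x ≠ x₂) : b x 1 = 0 := by
  by_cases hi : x₂.1 = x.1
  · exact h.apply_eq_zero_of_ne h.partner hi h2.symm 1
  · have h1 : x.1 ≠ i₁ := by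
      rintro rfl
      exact h.apply_ne_rank x.2 hx
    rw [← h.defect_eq_apply_one hx, h.defect_eq_zero h1 (Ne.symm hi)]

theorem center_eq_partner (h : HasDominantIndex b Y i₁ j₀ x₂) (h2 : x₂.1 = 0) :
    (⟨0, j₀⟩ : Leg S) = x₂ := by
  by_contra hne
  exact h.rank_pos.ne' (h.partner.symm.trans (h.apply_eq_zero_of_ne h.center h2.symm hne 0))

theorem link_collapse_zero (h : HasDominantIndex b Y i₁ j₀ x₂) :
    link (collapse b) 0 = rank b + b x₂ 1 - Y 0 := by
  have hdiff : ∑ i, (attached (collapse b) i - Y i) = attached (collapse b) 0 - Y 0 +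
      (attached (collapse b) i₁ - Y i₁) := by
    refine Fintype.sum_eq_add 0 i₁ h.index_ne_zero.symm fun i hi => ?_
    obtain ⟨j, hj⟩ := h.exists_eq_rank hi.2
    exact sub_eq_zero.2 (h.attached_collapse hj hi.1)
  rw [Finset.sum_sub_distrib, h.sum_defect, attached_zero,
    h.attached_collapse_of_forall_ne h.apply_ne_rank h.index_ne_zero, h.defect_index] at hdiff
  rw [link, if_pos rfl]
  linarith

theorem reflection_center (h : HasDominantIndex b Y i₁ j₀ x₂) :
    blockTerm (collapse b) ⟨0, j₀⟩ - link (collapse b) 0 = rank b - b x₂ 1 := by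
  have hnot (j) : (⟨0, j⟩ : Leg S) ∉ concentratedLegs b :=
    fun hj => (mem_concentratedLegs.1 hj).1 rfl
  rw [h.blockTerm_collapse_of_notMem hnot (h.center ▸ h.rank_pos.ne'), h.link_collapse_zero]
  ring

theorem rank_setCoord_center (h : HasDominantIndex b Y i₁ j₀ x₂) (c : ℤ) :
    rank (setCoord (collapse b) ⟨0, j₀⟩ 0 c) = c := by
  refine (Fintype.sum_eq_single j₀ fun j hj => ?_).trans (if_pos ⟨rfl, rfl⟩)
  have hne : (⟨0, j⟩ : Leg S) ≠ ⟨0, j₀⟩ := fun e => hj (by simpa using e)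
  rw [setCoord_of_ne _ hne, collapse_of_eq_zero rfl]
  exact h.eq_zero_of_ne h.center hj.symm 0

theorem weylEquiv_pivot (h : HasDominantIndex b Y i₁ j₀ x₂) :
    WeylEquiv (toVec b) (toVec (pivot b j₀ x₂)) := by
  refine (h.weylEquiv_shiftLegs subset_rfl).trans ?_
  change WeylEquiv (toVec (collapse b)) _
  have hterm : Terminates (collapse b) := h.isHarmonic_collapse.terminates
  have center_zero : collapse b ⟨0, j₀⟩ 0 = rank b :=
    (congrFun (collapse_of_eq_zero rfl) 0).trans h.center
  by_cases h2 : x₂.1 = 0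
  · obtain rfl := h.center_eq_partner h2
    rw [pivot, shiftLegs_setCoord_zero]
    refine hterm.weylEquiv_shiftLegs_singleton (fun _ => ?_) (absurd iirr_zero)
    rw [h.reflection_center, center_zero, collapse_of_eq_zero rfl]
  have hne : ∀ j, (⟨x₂.1, j⟩ : Leg S) ≠ ⟨0, j₀⟩ := fun j e => h2 (congrArg Sigma.fst e)
  have hx₂ : setCoord (collapse b) ⟨0, j₀⟩ 0 (b x₂ 1) x₂ = collapse b x₂ :=
    setCoord_of_ne _ (hne x₂.2) _ _
  refine (hterm.weylEquiv_setCoord_head (x := ⟨0, j₀⟩) iirr_zero (c := b x₂ 1) ?_).trans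
    ((terminates_setCoord_zero hterm _ _).weylEquiv_shiftLegs_singleton (fun hirr => ?_)
      fun hreg => ?_)
  · rw [h.reflection_center, center_zero]
    ring
  · have hmem := mem_concentratedLegs.2 ⟨h2, hirr, h.partner⟩
    rw [blockTerm_congr fun j => setCoord_of_ne _ (hne j) _ _, h.blockTerm_collapse_of_mem hmem,
      link, if_neg h2, h.rank_setCoord_center, hx₂, collapse_of_mem hmem, collapse_of_mem hmem]
    ring
  · rw [hx₂, collapse_of_not_iirr hreg, h.rank_setCoord_center]

theorem pivot_of_ne {x : Leg S} (h0 : x ≠ ⟨0, j₀⟩) (h2 : x ≠ x₂) :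
    pivot b j₀ x₂ x = collapse b x := by
  rw [pivot, shiftLegs_of_notMem _ (Finset.notMem_singleton.2 h2), setCoord_of_ne _ h0]

theorem pivot_partner (b : Chain S) (j₀ : Fin (S.m 0)) (x₂ : Leg S) (k : ℕ) :
    pivot b j₀ x₂ x₂ k = collapse b x₂ (k + 1) := by
  rw [pivot, shiftLegs_of_mem _ (Finset.mem_singleton_self x₂), setCoord]
  exact if_neg fun e => Nat.succ_ne_zero k e.2

theorem pivot_center_zero (b : Chain S) (j₀ : Fin (S.m 0)) (x₂ : Leg S) :
    pivot b j₀ x₂ ⟨0, j₀⟩ 0 = b x₂ 1 := by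
  by_cases h2 : ⟨0, j₀⟩ = x₂
  · rw [← h2, pivot_partner, collapse_of_eq_zero rfl]
  · rw [pivot, shiftLegs_of_notMem _ (Finset.notMem_singleton.2 h2)]
    exact if_pos ⟨rfl, rfl⟩

theorem pivot_center_succ (h : HasDominantIndex b Y i₁ j₀ x₂) (h2 : ⟨0, j₀⟩ ≠ x₂) (k : ℕ) :
    pivot b j₀ x₂ ⟨0, j₀⟩ (k + 1) = 0 := by
  rw [pivot, shiftLegs_of_notMem _ (Finset.notMem_singleton.2 h2)]
  refine (if_neg fun e => Nat.succ_ne_zero k e.2).trans ?_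
  rw [collapse_of_eq_zero rfl]
  exact (h.leg _).eq_zero_of_le (h.apply_one_eq_zero h.center h2) (Nat.succ_le_succ (Nat.zero_le k))

theorem pivot_index (h : HasDominantIndex b Y i₁ j₀ x₂) (j : Fin (S.m i₁)) :
    pivot b j₀ x₂ ⟨i₁, j⟩ = b ⟨i₁, j⟩ := by
  rw [pivot_of_ne (fun e => h.index_ne_zero (congrArg Sigma.fst e))
    (fun e => h.partner_ne (congrArg Sigma.fst e).symm), collapse_of_forall_ne h.apply_ne_rank]

theorem pivot_eq_zero (h : HasDominantIndex b Y i₁ j₀ x₂) {x : Leg S} (hx : ∀ k, b x k = 0)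
    (k : ℕ) : pivot b j₀ x₂ x k = 0 := by
  have ne_of_eq_rank {y : Leg S} (hy : b y 0 = rank b) : x ≠ y := by
    rintro rfl
    exact h.rank_pos.ne' (hy.symm.trans (hx 0))
  rw [pivot_of_ne (ne_of_eq_rank h.center) (ne_of_eq_rank h.partner), collapse_apply_eq_zero hx]

theorem rank_pivot (h : HasDominantIndex b Y i₁ j₀ x₂) : rank (pivot b j₀ x₂) = b x₂ 1 :=
  (Fintype.sum_eq_single j₀ fun _ hj => h.pivot_eq_zero (h.eq_zero_of_ne h.center hj.symm) 0).trans
    (pivot_center_zero b j₀ x₂)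

theorem pivot_apply_zero (h : HasDominantIndex b Y i₁ j₀ x₂) {x : Leg S} (hx : Iirr S x.1)
    (h1 : x.1 ≠ i₁) (hne : x ≠ ⟨0, j₀⟩) (hne2 : x ≠ x₂) : pivot b j₀ x₂ x 0 = 0 := by
  obtain ⟨j, hj⟩ := h.exists_eq_rank h1
  by_cases hxj : ⟨x.1, j⟩ = x
  · rw [hxj] at hj
    have h0 : x.1 ≠ 0 := fun h0 =>
      h.rank_pos.ne' (hj.symm.trans (h.apply_eq_zero_of_ne h.center h0.symm hne.symm 0))
    rw [pivot_of_ne hne hne2, collapse_of_mem (mem_concentratedLegs.2 ⟨h0, hx, hj⟩),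
      h.apply_one_eq_zero hj hne2]
  · exact h.pivot_eq_zero (h.apply_eq_zero_of_ne (y := x) hj rfl hxj) 0

theorem isHarmonicLeg_pivot_center (h : HasDominantIndex b Y i₁ j₀ x₂) (h2 : ⟨0, j₀⟩ ≠ x₂) :
    IsHarmonicLeg (S.e 0 j₀) (pivot b j₀ x₂ ⟨0, j₀⟩) where
  nonneg
    | 0 => (pivot_center_zero b j₀ x₂).symm ▸ (h.leg x₂).nonneg 1
    | k + 1 => (h.pivot_center_succ h2 k).ge
  eq_zero k hk := by
    obtain ⟨k, rfl⟩ := Nat.exists_eq_succ_of_ne_zero ((S.he _ _).trans_le hk).ne'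
    exact h.pivot_center_succ h2 k
  harmonic k hk := absurd (h.pivot_center_succ h2 k) hk

theorem isHarmonic_pivot (h : HasDominantIndex b Y i₁ j₀ x₂) : IsHarmonic (pivot b j₀ x₂) where
  leg x := by
    by_cases h2 : x = x₂
    · subst h2
      rw [funext (pivot_partner b j₀ x)]
      exact (h.isHarmonic_collapse.leg x).tail
    by_cases h0 : x = ⟨0, j₀⟩
    · subst h0
      exact h.isHarmonicLeg_pivot_center h2
    · rw [pivot_of_ne h0 h2]
      exact h.isHarmonic_collapse.leg x
  anchored x hx hx1 := by
    have h0 : x ≠ ⟨0, j₀⟩ := by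
      rintro rfl
      exact hx iirr_zero
    obtain rfl : x = x₂ := by
      by_contra h2
      rw [pivot_of_ne h0 h2, collapse_of_not_iirr hx] at hx1
      exact hx1 (h.apply_one_eq_zero (h.isBalanced.apply_zero_of_not_iirr hx) h2)
    rw [pivot_partner, collapse_of_not_iirr hx, h.rank_pivot]

theorem attached_pivot_index (h : HasDominantIndex b Y i₁ j₀ x₂) :
    attached (pivot b j₀ x₂) i₁ = rank b := by
  rw [attached, if_neg h.index_ne_zero, if_pos (h.iirr_of_forall_ne h.apply_ne_rank)]
  simp only [h.pivot_index, h.sum_head]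

theorem attached_pivot_partner (h : HasDominantIndex b Y i₁ j₀ x₂) (h2 : x₂.1 ≠ 0) :
    attached (pivot b j₀ x₂) x₂.1 = b x₂ 2 := by
  by_cases hirr : Iirr S x₂.1
  · rw [attached, if_neg h2, if_pos hirr, Fintype.sum_eq_single x₂.2 fun j hj =>
      h.pivot_eq_zero (h.eq_zero_of_ne h.partner hj.symm) 0]
    exact (pivot_partner b j₀ x₂ 0).trans
      (collapse_of_mem (mem_concentratedLegs.2 ⟨h2, hirr, h.partner⟩) 1)
  · rw [attached_of_not_iirr hirr, pivot_partner, collapse_of_not_iirr hirr]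

theorem blockTerm_pivot (h : HasDominantIndex b Y i₁ j₀ x₂) {x : Leg S} (hx : b x 0 = rank b) :
    blockTerm (pivot b j₀ x₂) x = 2 * pivot b j₀ x₂ x 0 - pivot b j₀ x₂ x 1 :=
  blockTerm_of_single _ fun _ hj => h.pivot_eq_zero (h.eq_zero_of_ne hx hj.symm) 0

theorem blockTerm_pivot_center_le (h : HasDominantIndex b Y i₁ j₀ x₂) (h0 : b x₂ 1 ≠ 0) :
    blockTerm (pivot b j₀ x₂) ⟨0, j₀⟩ ≤ ∑ i, attached (pivot b j₀ x₂) i := by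
  have hnn := h.isHarmonic_pivot.attached_nonneg
  have hleg := (h.leg x₂).harmonic 0 h0
  rw [h.partner] at hleg
  rw [h.blockTerm_pivot h.center, pivot_center_zero]
  by_cases h2 : x₂.1 = 0
  · have hle := Finset.single_le_sum (fun i _ => hnn i) (Finset.mem_univ i₁)
    obtain rfl := h.center_eq_partner h2
    rw [h.attached_pivot_index] at hle
    rw [pivot_partner, collapse_of_eq_zero rfl]
    linarith
  · have hle := Finset.sum_le_sum_of_subset_of_nonneg (Finset.subset_univ {i₁, x₂.1})
      fun i _ _ => hnn i
    rw [Finset.sum_pair h.partner_ne.symm, h.attached_pivot_index,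
      h.attached_pivot_partner h2] at hle
    rw [h.pivot_center_succ fun e => h2 (congrArg Sigma.fst e).symm]
    linarith

theorem blockTerm_pivot_le_link (h : HasDominantIndex b Y i₁ j₀ x₂) {x : Leg S}
    (hx : Iirr S x.1) (hx0 : pivot b j₀ x₂ x 0 ≠ 0) :
    blockTerm (pivot b j₀ x₂) x ≤ link (pivot b j₀ x₂) x.1 := by
  by_cases h1 : x.1 = i₁
  · subst h1
    rw [blockTerm_congr h.pivot_index, link, if_neg h.index_ne_zero, h.rank_pivot,
      h.blockTerm_eq x (congrFun (h.pivot_index x.2) 0 ▸ hx0), h.defect_index]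
    linarith
  by_cases hne : x = ⟨0, j₀⟩
  · subst hne
    rw [pivot_center_zero] at hx0
    rw [link, if_pos rfl]
    exact h.blockTerm_pivot_center_le hx0
  obtain rfl : x = x₂ := by
    by_contra hne2
    exact hx0 (h.pivot_apply_zero hx h1 hne hne2)
  have h2 : x.1 ≠ 0 := fun h2 => hne (h.center_eq_partner h2).symm
  have hmem := mem_concentratedLegs.2 ⟨h2, hx, h.partner⟩
  rw [pivot_partner, collapse_of_mem hmem] at hx0
  rw [h.blockTerm_pivot h.partner, pivot_partner, pivot_partner, collapse_of_mem hmem,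
    collapse_of_mem hmem, link, if_neg h2, h.rank_pivot]
  linarith [(h.leg x).harmonic 1 hx0]

theorem connSupp_pivot (h : HasDominantIndex b Y i₁ j₀ x₂) :
    connSupp S (toVec (pivot b j₀ x₂)) := by
  by_cases hc : b x₂ 1 = 0
  · refine h.isHarmonic_pivot.connSupp_of_single_block (i := i₁) (fun x hx hx0 => ?_) ?_
    · by_contra h1
      by_cases hne2 : x = x₂
      · subst hne2
        rw [pivot_partner] at hx0
        refine hx0 ?_
        by_cases hmem : x ∈ concentratedLegs b
        · exact (collapse_of_mem hmem 1).trans ((h.leg x).eq_zero_of_le hc one_le_two)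
        · exact (congrFun (collapse_of_notMem hmem) 1).trans hc
      by_cases hne : x = ⟨0, j₀⟩
      · subst hne
        exact hx0 ((pivot_center_zero b j₀ x₂).trans hc)
      · exact hx0 (h.pivot_apply_zero hx h1 hne hne2)
    · simp only [h.pivot_index]
      exact fun j hj => h.exists_dcnt_ne_zero (by rw [h.defect_index, hc, sub_zero]) hj
  · exact h.isHarmonic_pivot.connSupp_of_attached_ne_zero (h.rank_pivot.trans_ne hc)
      (h.attached_pivot_index.trans_ne h.rank_pos.ne')

theorem fund_pivot (h : HasDominantIndex b Y i₁ j₀ x₂) : fund S (toVec (pivot b j₀ x₂)) := by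
  obtain ⟨j, hj⟩ := h.exists_apply_zero_ne_zero i₁
  rw [← h.pivot_index] at hj
  exact h.isHarmonic_pivot.fund_toVec (fun x hx => h.blockTerm_pivot_le_link hx) h.connSupp_pivot
    (h.iirr_of_forall_ne h.apply_ne_rank) hj

end HasDominantIndex

theorem IsIsotropic.exists_defect_add_defect_eq (h : IsIsotropic b Y) {i₁ : Fin (S.p + 1)}
    (h1 : i₁ ≠ 0) (hconc : ∀ i ≠ i₁, ∃ j, b ⟨i, j⟩ 0 = rank b) (hlt : rank b < Y i₁) :
    ∃ i₂ ≠ i₁, Y i₁ + Y i₂ = 2 * rank b := by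
  have half {i} (hi : i ≠ i₁) (hne : Y i ≠ 0) : rank b ≤ 2 * Y i := by
    obtain ⟨j, hj⟩ := hconc i hi
    rw [h.defect_eq_apply_one hj] at hne ⊢
    exact hj ▸ (h.leg _).apply_zero_le_two_mul_apply_one hne
  by_cases hall : ∀ i ≠ i₁, Y i = 0
  · refine ⟨0, h1.symm, ?_⟩
    rw [hall 0 h1.symm, add_zero, ← h.sum_defect]
    exact (Fintype.sum_eq_single i₁ hall).symm
  push Not at hall
  obtain ⟨i₂, h2, hY2⟩ := hall
  refine ⟨i₂, h2, ?_⟩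
  rw [← h.sum_defect]
  refine (Fintype.sum_eq_add i₁ i₂ h2.symm fun i hi => ?_).symm
  by_contra hY
  have hle := Finset.sum_le_sum_of_subset_of_nonneg (Finset.subset_univ {i₁, i₂, i})
    fun i _ _ => h.defect_nonneg i
  rw [Finset.sum_insert (by simp [h2.symm, hi.1.symm]), Finset.sum_pair hi.2.symm,
    h.sum_defect] at hle
  linarith [half h2 hY2, half hi.1 hY]

theorem IsIsotropic.exists_hasDominantIndex (h : IsIsotropic b Y) {i₁ : Fin (S.p + 1)}
    (h1 : i₁ ≠ 0) (hi₁ : ∀ j, b ⟨i₁, j⟩ 0 ≠ rank b) (hY : Y i₁ ≠ rank b) :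
    ∃ j₀ x₂, HasDominantIndex b Y i₁ j₀ x₂ := by
  have hlt : rank b < Y i₁ := lt_of_le_of_ne (h.rank_le_defect hi₁) hY.symm
  have hconc (i) (hi : i ≠ i₁) : ∃ j, b ⟨i, j⟩ 0 = rank b := by
    by_contra hne
    have hle := Finset.sum_le_sum_of_subset_of_nonneg (Finset.subset_univ {i₁, i})
      fun i _ _ => h.defect_nonneg i
    rw [Finset.sum_pair hi.symm, h.sum_defect] at hle
    linarith [h.rank_le_defect (not_exists.1 hne)]
  obtain ⟨i₂, h2, hsum⟩ := h.exists_defect_add_defect_eq h1 hconc hlt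
  obtain ⟨j₀, hj₀⟩ := hconc 0 h1.symm
  obtain ⟨j₂, hj₂⟩ := hconc i₂ h2
  exact ⟨j₀, ⟨i₂, j₂⟩, h, h1, hi₁, hj₀, hj₂, hsum⟩

end DominantCase

theorem IsIsotropic.exists_weylEquiv_fund {b : Chain S} {Y : Fin (S.p + 1) → ℤ}
    (h : IsIsotropic b Y) : ∃ γ, WeylEquiv (toVec b) γ ∧ fund S γ := by
  by_cases htight : ∀ i ≠ 0, (∀ j, b ⟨i, j⟩ 0 ≠ rank b) → Y i = rank b
  · exact ⟨_, h.weylEquiv_shiftLegs subset_rfl, h.fund_collapse_of_tight htight⟩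
  · push Not at htight
    obtain ⟨i₁, h1, hi₁, hY⟩ := htight
    obtain ⟨j₀, x₂, hdom⟩ := h.exists_hasDominantIndex h1 hi₁ hY
    exact ⟨_, hdom.weylEquiv_pivot, hdom.fund_pivot⟩

theorem IsBalanced.convex_of_bform_nonpos {f : Chain S} (hf : IsBalanced f)
    (hnn : ∀ x k, 0 ≤ f x k)
    (hform : ∀ i j κ, bform S (toVec f) (eps S (Sum.inr ⟨i, j, κ⟩)) ≤ 0) (x : Leg S) (k : ℕ) :
    2 * f x (k + 1) ≤ f x k + f x (k + 2) := by
  by_cases hk : k < S.e x.1 x.2 - 1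
  · have := hform x.1 x.2 ⟨k, hk⟩
    rw [hf.bform_inr x] at this
    linarith
  · rw [hf.terminates x (k + 1) (by omega)]
    linarith [hnn x k, hnn x (k + 2)]

theorem statement12_general (S : Setup) (β : V S → ℤ) (hL : inL S β) (hnn : ∀ a, 0 ≤ β a)
    (hne : β ≠ 0) (hJ : ∀ I : ∀ i, Fin (S.m i), bform S β (epsJ S I) ≤ 0)
    (hleg : ∀ i j κ, bform S β (eps S (Sum.inr ⟨i, j, κ⟩)) ≤ 0) (hq : qform S β = 0) :
    isImagRoot S β := by
  obtain ⟨b, hb, hbnn, rfl⟩ : ∃ b : Chain S, IsBalanced b ∧ (∀ x k, 0 ≤ b x k) ∧ toVec b = β :=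
    ⟨chainOf β, isBalanced_chainOf hL, chainOf_nonneg hnn, toVec_chainOf β⟩
  have hconv := hb.convex_of_bform_nonpos hbnn hleg
  have htrans (I : ∀ i, Fin (S.m i)) : ∑ i, excess b ⟨i, I i⟩ ≤ 0 := hb.bform_epsJ I ▸ hJ I
  obtain ⟨Y, hY⟩ := hb.exists_isIsotropic hbnn hconv (hb.rank_pos hbnn hconv hne) htrans hq
  obtain ⟨γ, ⟨l, hl⟩, hγ⟩ := hY.exists_weylEquiv_fund
  exact ⟨l, γ, Or.inl hγ, hl⟩

/-- If `β ∈ F̃` and `q(β) = 0`, then `β` is a positive root of the quiver `Q`. -/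
theorem statement12 (S : Setup) (β : V S → ℤ) (hβ : quasiFund S β)
    (hq : qform S β = 0) : isPosRoot S β := by
  obtain ⟨hL, hnn, hne, hJ, hleg, -⟩ := hβ
  exact ⟨Or.inr (statement12_general S β hL hnn hne hJ hleg hq), hnn⟩

end

end DS
end

section
/- Let R̃^+ denote the set of positive roots of Q lying in L. If α ∈ R̃^+ and 𝐢 ∈ J are such that s_𝐢(α) ∉ R̃^+, then α = ε_𝐢. -/
open Polynomial Matrix BigOperators

namespace DS

noncomputable section

/-!
The vector `ε_𝐢` is a real root: starting from `ε_[0,j₀]`, reflect in the pairwise orthogonal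
vertices `[i,j_i]`, each joined to `[0,j₀]` by a single arrow. Hence `s_𝐢` is the reflection in a
real root, so it permutes the roots, and it preserves `L`. If `s_𝐢(α) ∉ R̃⁺`, then `s_𝐢(α) ≤ 0`,
because every root is nonnegative or nonpositive. But `s_𝐢(α)` and `α ≥ 0` differ by a multiple of
`ε_𝐢`, so `α` vanishes off the support of `ε_𝐢`, and the equations of `L` force `α = t ε_𝐢` with
`t ≥ 0`. As `(α, α) = 2t²` is either `2` or nonpositive and `α ≠ 0`, we get `t = 1`.

For the sign of a real root `w ε_a`, assume `ℓ(w s_a) > ℓ(w)` and write `w = v u`, where `u` is a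
maximal alternating word in `s_a` and a right descent `s_b` of `w`. By induction on the length
`v ε_a, v ε_b ≥ 0`, and the coefficients of `u ε_a` in `ε_a, ε_b` are values of Chebyshev
polynomials at `-(ε_a, ε_b)`, nonnegative for the lengths that `u` can have. A fundamental vector
stays nonnegative under the Weyl group because each further letter adds a nonnegative multiple of
a positive real root.
-/

/-! ### Dihedral cosets in a Coxeter group -/

section Coxeter

open CoxeterSystem

variable {B W : Type*} [Group W] {M : CoxeterMatrix B} (cs : CoxeterSystem M W)

theorem not_isRightDescent_of_length_mul_wordProd_cons {v : W} {c : B} {ω : List B}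
    (h : cs.length (v * cs.wordProd (c :: ω)) = cs.length v + (ω.length + 1)) :
    ¬ cs.IsRightDescent v c := by
  intro hc
  have hvc : cs.length (v * cs.simple c) + 1 = cs.length v := cs.isRightDescent_iff.1 hc
  have hle : cs.length (v * cs.wordProd (c :: ω)) ≤ cs.length (v * cs.simple c) + ω.length := by
    rw [cs.wordProd_cons, ← mul_assoc]
    exact (cs.length_mul_le _ _).trans (Nat.add_le_add_left (cs.length_wordProd_le ω) _)
  omega

theorem exists_maximal_alternatingWord_suffix {v w : W} {a b : B} {k : ℕ}
    (hw : w = v * cs.wordProd (alternatingWord a b k)) (hl : cs.length w = cs.length v + k) :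
    ∃ u j, k ≤ j ∧ w = u * cs.wordProd (alternatingWord a b j) ∧
      cs.length w = cs.length u + j ∧ ¬ cs.IsRightDescent u (if Even j then b else a) := by
  induction hn : cs.length v generalizing v k with
  | zero =>
    refine ⟨v, k, le_rfl, hw, hl, fun h => ?_⟩
    simp [cs.isRightDescent_iff, hn] at h
  | succ n ih =>
    by_cases h : cs.IsRightDescent v (if Even k then b else a)
    · have hlen := cs.isRightDescent_iff.1 h
      obtain ⟨u, j, hkj, hu⟩ := ih (v := v * cs.simple (if Even k then b else a)) (k := k + 1)
        (by rw [hw, alternatingWord_succ', cs.wordProd_cons, ← mul_assoc,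
          cs.simple_mul_simple_cancel_right])
        (by omega) (by omega)
      exact ⟨u, j, by omega, hu⟩
    · exact ⟨v, k, le_rfl, hw, hl, h⟩

theorem lt_of_length_mul_wordProd_alternatingWord {v w : W} {a b : B} {k : ℕ}
    (hw : w = v * cs.wordProd (alternatingWord a b k)) (hl : cs.length w = cs.length v + k)
    (ha : ¬ cs.IsRightDescent w a) (hM : M a b ≠ 0) : k < M a b := by
  by_contra! hk
  have hba : M b a = M a b := M.symmetric b a
  have hred : ¬ cs.IsReduced (alternatingWord b a (k + 1)) :=
    cs.not_isReduced_alternatingWord b a (hba ▸ hM) (by omega)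
  have hwa : w * cs.simple a = v * cs.wordProd (alternatingWord b a (k + 1)) := by
    rw [alternatingWord_succ, cs.wordProd_concat, hw, mul_assoc]
  have hlen : cs.length (w * cs.simple a) = cs.length w + 1 := cs.not_isRightDescent_iff.1 ha
  have hword := cs.length_wordProd_le (alternatingWord b a (k + 1))
  rw [length_alternatingWord] at hword
  have hmul := cs.length_mul_le v (cs.wordProd (alternatingWord b a (k + 1)))
  rw [← hwa] at hmul
  exact hred (by rw [CoxeterSystem.IsReduced, length_alternatingWord]; omega)

/-- Here `v` is the element of minimal length in the coset `w⟨s_a, s_b⟩`. -/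
theorem exists_eq_mul_wordProd_alternatingWord {w : W} {a b : B}
    (ha : ¬ cs.IsRightDescent w a) (hb : cs.IsRightDescent w b) :
    ∃ v k, w = v * cs.wordProd (alternatingWord a b k) ∧ cs.length v < cs.length w ∧
      (M a b = 0 ∨ k < M a b) ∧ ¬ cs.IsRightDescent v a ∧ ¬ cs.IsRightDescent v b := by
  have hwb : w = w * cs.simple b * cs.wordProd (alternatingWord a b 1) := by
    simp [alternatingWord]
  obtain ⟨v, k, hk, hw, hl, hnext⟩ := exists_maximal_alternatingWord_suffix cs hwb
    (cs.isRightDescent_iff.1 hb).symm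
  obtain ⟨k, rfl⟩ : ∃ j, k = j + 1 := ⟨k - 1, by omega⟩
  have hfirst : ¬ cs.IsRightDescent v (if Even k then b else a) := by
    apply not_isRightDescent_of_length_mul_wordProd_cons cs (ω := alternatingWord a b k)
    rw [← alternatingWord_succ', ← hw, hl, length_alternatingWord]
  have hdesc : ¬ cs.IsRightDescent v a ∧ ¬ cs.IsRightDescent v b := by
    by_cases hpar : Even k
    · exact ⟨by simpa [Nat.even_add_one, hpar] using hnext, by simpa [hpar] using hfirst⟩
    · exact ⟨by simpa [hpar] using hfirst, by simpa [Nat.even_add_one, hpar] using hnext⟩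
  refine ⟨v, k + 1, hw, by omega, ?_, hdesc⟩
  exact or_iff_not_imp_left.2 (lt_of_length_mul_wordProd_alternatingWord cs hw hl ha)

end Coxeter

/-! ### Simple systems and their Weyl groups -/

open Polynomial.Chebyshev in
theorem chebyshevS_eval_nonneg_and_le {c : ℤ} (hc : 2 ≤ c) (k : ℕ) :
    0 ≤ (S ℤ (k - 1)).eval c ∧ (S ℤ (k - 1)).eval c ≤ (S ℤ k).eval c := by
  induction k with
  | zero => simp
  | succ k ih =>
    have hrec : (S ℤ (k + 1)).eval c = c * (S ℤ k).eval c - (S ℤ (k - 1)).eval c := by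
      simp [S_add_one]
    push_cast
    rw [hrec, add_sub_cancel_right]
    exact ⟨by linarith, by nlinarith⟩

/-- A family of simple roots in a lattice with a symmetric form, as for a symmetric generalized
Cartan matrix. The simple roots need not be linearly independent. -/
structure SimpleSystem (ι M : Type*) [AddCommGroup M] where
  form : LinearMap.BilinForm ℤ M
  root : ι → M
  form_comm : ∀ x y, form x y = form y x
  form_root_self : ∀ a, form (root a) (root a) = 2
  form_root_nonpos : ∀ a b, a ≠ b → form (root a) (root b) ≤ 0

namespace SimpleSystem

variable {ι M : Type*} [AddCommGroup M] (P : SimpleSystem ι M)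

/-- The simple reflection `x ↦ x - (α_a, x) α_a`. -/
def reflection (a : ι) : M ≃ₗ[ℤ] M := Module.reflection (P.form_root_self a)

theorem reflection_apply (a : ι) (x : M) :
    P.reflection a x = x - P.form (P.root a) x • P.root a :=
  Module.reflection_apply x (P.form_root_self a)

theorem reflection_mul_self (a : ι) : P.reflection a * P.reflection a = 1 :=
  LinearEquiv.ext (Module.involutive_reflection (P.form_root_self a))

theorem form_reflection (a : ι) (x y : M) :
    P.form (P.reflection a x) (P.reflection a y) = P.form x y := by
  simp only [reflection_apply, map_sub, map_smul, LinearMap.sub_apply, LinearMap.smul_apply,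
    form_root_self, smul_eq_mul, P.form_comm x (P.root a)]
  ring

theorem reflection_mul_pow_two {a b : ι} (h : P.form (P.root a) (P.root b) = 0) :
    (P.reflection a * P.reflection b) ^ 2 = 1 := by
  have h' : P.form (P.root b) (P.root a) = 0 := by rw [P.form_comm, h]
  ext x
  simp only [pow_succ, pow_zero, one_mul, LinearEquiv.mul_apply, reflection_apply, map_sub,
    map_smul, form_root_self, h, h', LinearEquiv.coe_one, id_eq]
  module

theorem reflection_mul_pow_three {a b : ι} (h : P.form (P.root a) (P.root b) = -1) :
    (P.reflection a * P.reflection b) ^ 3 = 1 := by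
  have h' : P.form (P.root b) (P.root a) = -1 := by rw [P.form_comm, h]
  ext x
  simp only [pow_succ, pow_zero, one_mul, LinearEquiv.mul_apply, reflection_apply, map_sub,
    map_smul, form_root_self, h, h', LinearEquiv.coe_one, id_eq]
  module

theorem eq_of_form_root_eq_two {a b : ι} (h : P.form (P.root a) (P.root b) = 2) : a = b := by
  by_contra hab
  linarith [P.form_root_nonpos a b hab]

/-- The order of `s_a s_b`, read off the pairing of the two simple roots; `0` stands for `∞`. -/
def coxeterOrder (c : ℤ) : ℕ :=
  if c = 2 then 1 else if c = 0 then 2 else if c = -1 then 3 else 0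

/-- The Coxeter matrix of the Weyl group, with entries `1, 2, 3, ∞`. -/
def coxeterMatrix : CoxeterMatrix ι where
  M := Matrix.of fun a b => coxeterOrder (P.form (P.root a) (P.root b))
  isSymm := by
    ext a b
    simp [P.form_comm (P.root a)]
  diagonal a := by simp [coxeterOrder, P.form_root_self]
  off_diagonal a b hab := by
    have h := mt P.eq_of_form_root_eq_two hab
    simp only [Matrix.of_apply, coxeterOrder, if_neg h]
    split_ifs <;> norm_num

theorem coxeterMatrix_apply (a b : ι) :
    P.coxeterMatrix a b = coxeterOrder (P.form (P.root a) (P.root b)) := rfl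

theorem isLiftable_reflection : P.coxeterMatrix.IsLiftable P.reflection := by
  intro a b
  rw [coxeterMatrix_apply, coxeterOrder]
  split_ifs with h2 h0 h1
  · rw [P.eq_of_form_root_eq_two h2, P.reflection_mul_self, one_pow]
  · exact P.reflection_mul_pow_two h0
  · exact P.reflection_mul_pow_three h1
  · exact pow_zero _

/-- The abstract Weyl group, with the simple reflections as Coxeter generators. -/
abbrev coxeterSystem : CoxeterSystem P.coxeterMatrix P.coxeterMatrix.Group :=
  P.coxeterMatrix.toCoxeterSystem

/-- The action of the Weyl group on the lattice. -/
def weyl : P.coxeterMatrix.Group →* (M ≃ₗ[ℤ] M) :=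
  P.coxeterSystem.lift ⟨P.reflection, P.isLiftable_reflection⟩

theorem weyl_simple (a : ι) : P.weyl (P.coxeterSystem.simple a) = P.reflection a :=
  P.coxeterSystem.lift_apply_simple P.isLiftable_reflection a

theorem form_weyl (w : P.coxeterMatrix.Group) (x y : M) :
    P.form (P.weyl w x) (P.weyl w y) = P.form x y := by
  induction w using P.coxeterSystem.simple_induction_left with
  | one => simp
  | mul_simple_left w a ih =>
    rw [map_mul, LinearEquiv.mul_apply, LinearEquiv.mul_apply, weyl_simple, form_reflection, ih]

open Polynomial.Chebyshev in
theorem chebyshevS_eval_nonneg_of_lt_coxeterOrder {c : ℤ} (hc : c ≤ 0) {k : ℕ}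
    (hk : coxeterOrder c = 0 ∨ k < coxeterOrder c) :
    0 ≤ (S ℤ k).eval (-c) ∧ 0 ≤ (S ℤ (k - 1)).eval (-c) := by
  obtain rfl | rfl | hc2 : c = 0 ∨ c = -1 ∨ 2 ≤ -c := by omega
  · have hk2 : k < 2 := by simpa [coxeterOrder] using hk
    interval_cases k <;> simp
  · have hk3 : k < 3 := by simpa [coxeterOrder] using hk
    interval_cases k <;> simp [S_two]
  · have h := chebyshevS_eval_nonneg_and_le hc2 k
    exact ⟨h.1.trans h.2, h.1⟩

open Polynomial.Chebyshev CoxeterSystem in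
theorem weyl_alternatingWord_root (a b : ι) (k : ℕ) :
    P.weyl (P.coxeterSystem.wordProd (alternatingWord a b k)) (P.root a) =
      (S ℤ k).eval (-P.form (P.root a) (P.root b)) • P.root (if Even k then a else b) +
      (S ℤ (k - 1)).eval (-P.form (P.root a) (P.root b)) • P.root (if Even k then b else a) := by
  induction k with
  | zero => simp [alternatingWord]
  | succ k ih =>
    rw [alternatingWord_succ', wordProd_cons, map_mul, LinearEquiv.mul_apply, ih, weyl_simple]
    push_cast
    rw [add_sub_cancel_right, S_add_one]
    by_cases hk : Even k
    · simp only [hk, Nat.even_add_one, if_true, not_true_eq_false, if_false, reflection_apply,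
        map_add, map_smul, form_root_self, P.form_comm (P.root b) (P.root a),
        Polynomial.eval_sub, Polynomial.eval_mul, Polynomial.eval_X]
      module
    · simp only [hk, Nat.even_add_one, if_true, not_false_eq_true, if_false, reflection_apply,
        map_add, map_smul, form_root_self, Polynomial.eval_sub, Polynomial.eval_mul,
        Polynomial.eval_X]
      module

/-- The cone of nonnegative integral combinations of simple roots. -/
def cone : AddSubmonoid M := AddSubmonoid.closure (Set.range P.root)

theorem root_mem_cone (a : ι) : P.root a ∈ P.cone :=
  AddSubmonoid.subset_closure (Set.mem_range_self a)

theorem zsmul_mem_cone {x : M} (hx : x ∈ P.cone) {n : ℤ} (hn : 0 ≤ n) : n • x ∈ P.cone := by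
  lift n to ℕ using hn
  rw [natCast_zsmul]
  exact nsmul_mem hx n

theorem weyl_mul_alternatingWord_root_mem_cone {a b : ι} (hab : a ≠ b)
    {v : P.coxeterMatrix.Group} {k : ℕ}
    (hk : P.coxeterMatrix a b = 0 ∨ k < P.coxeterMatrix a b)
    (ha : P.weyl v (P.root a) ∈ P.cone) (hb : P.weyl v (P.root b) ∈ P.cone) :
    P.weyl (v * P.coxeterSystem.wordProd (CoxeterSystem.alternatingWord a b k)) (P.root a) ∈
      P.cone := by
  obtain ⟨h₁, h₂⟩ :=
    chebyshevS_eval_nonneg_of_lt_coxeterOrder (P.form_root_nonpos a b hab) hk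
  rw [map_mul, LinearEquiv.mul_apply, weyl_alternatingWord_root, map_add, map_smul, map_smul]
  refine add_mem (P.zsmul_mem_cone ?_ h₁) (P.zsmul_mem_cone ?_ h₂) <;> split_ifs <;> assumption

theorem weyl_root_mem_cone {w : P.coxeterMatrix.Group} {a : ι}
    (h : ¬ P.coxeterSystem.IsRightDescent w a) : P.weyl w (P.root a) ∈ P.cone := by
  induction hn : P.coxeterSystem.length w using Nat.strong_induction_on generalizing w a with
  | _ n ih =>
    obtain rfl | hw := eq_or_ne w 1
    · rw [map_one]
      exact P.root_mem_cone a
    · obtain ⟨b, hb⟩ := P.coxeterSystem.exists_rightDescent_of_ne_one hw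
      have hab : a ≠ b := fun hab => h (hab ▸ hb)
      obtain ⟨v, k, rfl, hlt, hk, hva, hvb⟩ :=
        exists_eq_mul_wordProd_alternatingWord P.coxeterSystem h hb
      exact P.weyl_mul_alternatingWord_root_mem_cone hab hk (ih _ (hn ▸ hlt) hva rfl)
        (ih _ (hn ▸ hlt) hvb rfl)

theorem weyl_mul_simple_apply (w : P.coxeterMatrix.Group) (a : ι) (x : M) :
    P.weyl (w * P.coxeterSystem.simple a) x =
      P.weyl w x - P.form (P.root a) x • P.weyl w (P.root a) := by
  rw [map_mul, LinearEquiv.mul_apply, weyl_simple, reflection_apply, map_sub, map_smul]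

theorem weyl_mul_simple_root (w : P.coxeterMatrix.Group) (a : ι) :
    P.weyl (w * P.coxeterSystem.simple a) (P.root a) = -P.weyl w (P.root a) := by
  rw [weyl_mul_simple_apply, form_root_self]
  module

theorem weyl_root_mem_cone_or_neg_mem_cone (w : P.coxeterMatrix.Group) (a : ι) :
    P.weyl w (P.root a) ∈ P.cone ∨ -P.weyl w (P.root a) ∈ P.cone := by
  by_cases h : P.coxeterSystem.IsRightDescent w a
  · right
    rw [← weyl_mul_simple_root]
    exact P.weyl_root_mem_cone (P.coxeterSystem.isRightDescent_iff_not_isRightDescent_mul.1 h)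
  · exact Or.inl (P.weyl_root_mem_cone h)

theorem weyl_mem_cone {x : M} (hx : x ∈ P.cone) (hanti : ∀ a, P.form (P.root a) x ≤ 0)
    (w : P.coxeterMatrix.Group) : P.weyl w x ∈ P.cone := by
  induction hn : P.coxeterSystem.length w using Nat.strong_induction_on generalizing w with
  | _ n ih =>
    obtain rfl | hw := eq_or_ne w 1
    · simpa using hx
    · obtain ⟨b, hb⟩ := P.coxeterSystem.exists_rightDescent_of_ne_one hw
      obtain ⟨v, rfl⟩ : ∃ v, w = v * P.coxeterSystem.simple b :=
        ⟨w * P.coxeterSystem.simple b, (P.coxeterSystem.simple_mul_simple_cancel_right b).symm⟩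
      have hv := P.coxeterSystem.isRightDescent_iff_not_isRightDescent_mul.1 hb
      rw [CoxeterSystem.IsRightDescent, P.coxeterSystem.simple_mul_simple_cancel_right] at hb
      rw [P.coxeterSystem.simple_mul_simple_cancel_right] at hv
      rw [weyl_mul_simple_apply, sub_eq_add_neg, ← neg_smul]
      exact add_mem (ih _ (hn ▸ hb) v rfl)
        (P.zsmul_mem_cone (P.weyl_root_mem_cone hv) (neg_nonneg.2 (hanti b)))

theorem exists_weyl_root_eq_add_sum {κ : Type*} (a : ι) (b : κ → ι) (t : Finset κ)
    (hcenter : ∀ i ∈ t, P.form (P.root (b i)) (P.root a) = -1)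
    (horth : ∀ i ∈ t, ∀ j ∈ t, i ≠ j → P.form (P.root (b i)) (P.root (b j)) = 0) :
    ∃ w, P.weyl w (P.root a) = P.root a + ∑ i ∈ t, P.root (b i) := by
  classical
  induction t using Finset.induction_on with
  | empty => exact ⟨1, by simp⟩
  | insert i t hi ih =>
    obtain ⟨w, hw⟩ := ih (fun j hj => hcenter j (Finset.mem_insert_of_mem hj)) fun j hj l hl =>
      horth j (Finset.mem_insert_of_mem hj) l (Finset.mem_insert_of_mem hl)
    have hpair : P.form (P.root (b i)) (P.root a + ∑ j ∈ t, P.root (b j)) = -1 := by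
      rw [map_add, map_sum, hcenter i (Finset.mem_insert_self i t), Finset.sum_eq_zero, add_zero]
      intro j hj
      exact horth i (Finset.mem_insert_self i t) j (Finset.mem_insert_of_mem hj)
        fun hij => hi (hij ▸ hj)
    refine ⟨P.coxeterSystem.simple (b i) * w, ?_⟩
    rw [map_mul, LinearEquiv.mul_apply, hw, weyl_simple, reflection_apply, hpair,
      Finset.sum_insert hi]
    module

theorem weyl_conj_simple (w : P.coxeterMatrix.Group) (a : ι) (x : M) :
    P.weyl (w * P.coxeterSystem.simple a * w⁻¹) x =
      x - P.form (P.weyl w (P.root a)) x • P.weyl w (P.root a) := by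
  have hx : P.weyl w (P.weyl w⁻¹ x) = x := by
    rw [← LinearEquiv.mul_apply, ← map_mul, mul_inv_cancel, map_one, LinearEquiv.coe_one, id_eq]
  have hform : P.form (P.root a) (P.weyl w⁻¹ x) = P.form (P.weyl w (P.root a)) x := by
    rw [← P.form_weyl w, hx]
  have hmul : P.weyl (w * P.coxeterSystem.simple a * w⁻¹) x =
      P.weyl (w * P.coxeterSystem.simple a) (P.weyl w⁻¹ x) := by
    rw [map_mul P.weyl (w * P.coxeterSystem.simple a), LinearEquiv.mul_apply]
  rw [hmul, weyl_mul_simple_apply, hx, hform]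

end SimpleSystem

/-! ### The root system of the quiver -/

section Quiver

variable (S : Setup)

theorem arr_self (a : V S) : arr S a a = 0 := by
  rcases a with ⟨i, j⟩ | ⟨i, j, κ⟩ <;> simp [arr]

/-- The Euler form `⟨·,·⟩` as a bilinear form. -/
def eulerForm : LinearMap.BilinForm ℤ (V S → ℤ) :=
  Matrix.toBilin' (1 - Matrix.of fun a b => (arr S a b : ℤ))

theorem eulerForm_apply (β γ : V S → ℤ) : eulerForm S β γ = eform S β γ := by
  simp only [eulerForm, eform, Matrix.toBilin'_apply, Matrix.sub_apply, Matrix.of_apply, mul_sub,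
    sub_mul, Finset.sum_sub_distrib, Matrix.one_apply]
  simp [mul_comm (β _)]

theorem eulerForm_single (a b : V S) :
    eulerForm S (Pi.single a 1) (Pi.single b 1) = (if a = b then 1 else 0) - (arr S a b : ℤ) := by
  simp [eulerForm, Matrix.toBilin'_single, Matrix.one_apply]

theorem eps_eq_single (a : V S) : eps S a = Pi.single a 1 := by
  ext b
  simp [eps, Pi.single_apply]

/-- The vertices of the quiver as simple roots. -/
def simpleSystem : SimpleSystem (V S) (V S → ℤ) where
  form := eulerForm S + (eulerForm S).flip
  root a := eps S a
  form_comm x y := by simp [add_comm]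
  form_root_self a := by simp [eps_eq_single, eulerForm_single, arr_self]
  form_root_nonpos a b hab := by simp [eps_eq_single, eulerForm_single, hab, hab.symm]

theorem simpleSystem_form (β γ : V S → ℤ) :
    (simpleSystem S).form β γ = eulerForm S β γ + eulerForm S γ β := rfl

theorem bform_eq_form (β γ : V S → ℤ) : bform S β γ = (simpleSystem S).form β γ := by
  rw [simpleSystem_form, eulerForm_apply, eulerForm_apply, bform]

theorem refl1_eq_reflection (a : V S) (β : V S → ℤ) :
    refl1 S a β = (simpleSystem S).reflection a β := by
  ext b
  rw [SimpleSystem.reflection_apply, SimpleSystem.form_comm, ← bform_eq_form]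
  rfl

theorem reflList_eq_weyl (l : List (V S)) (β : V S → ℤ) :
    reflList S l β = (simpleSystem S).weyl ((simpleSystem S).coxeterSystem.wordProd l) β := by
  induction l with
  | nil => simp [reflList]
  | cons a l ih =>
    rw [CoxeterSystem.wordProd_cons, map_mul, LinearEquiv.mul_apply, SimpleSystem.weyl_simple,
      ← ih, ← refl1_eq_reflection]
    rfl

variable {S}

theorem isRoot_iff_exists_weyl {β : V S → ℤ} :
    isRoot S β ↔ ∃ w γ, ((∃ a, γ = eps S a) ∨ fund S γ ∨ fund S (-γ)) ∧
      β = (simpleSystem S).weyl w γ := by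
  simp only [isRoot, isRealRoot, isImagRoot, reflList_eq_weyl,
    ← (simpleSystem S).coxeterSystem.wordProd_surjective.exists
      (p := fun w => ∃ a, β = (simpleSystem S).weyl w (eps S a)),
    ← (simpleSystem S).coxeterSystem.wordProd_surjective.exists
      (p := fun w => ∃ γ, (fund S γ ∨ fund S (-γ)) ∧ β = (simpleSystem S).weyl w γ)]
  constructor
  · rintro (⟨w, a, h⟩ | ⟨w, γ, hγ, h⟩)
    · exact ⟨w, _, .inl ⟨a, rfl⟩, h⟩
    · exact ⟨w, γ, .inr hγ, h⟩
  · rintro ⟨w, _, ⟨a, rfl⟩ | hγ, h⟩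
    · exact .inl ⟨w, a, h⟩
    · exact .inr ⟨w, _, hγ, h⟩

theorem eq_sum_smul_root (β : V S → ℤ) : β = ∑ a, β a • (simpleSystem S).root a := by
  ext b
  simp [simpleSystem, eps]

theorem mem_cone_iff_nonneg {β : V S → ℤ} : β ∈ (simpleSystem S).cone ↔ 0 ≤ β := by
  constructor
  · intro hβ
    have hle : (simpleSystem S).cone ≤ AddSubmonoid.nonneg (V S → ℤ) := by
      refine (AddSubmonoid.closure_le).2 ?_
      rintro _ ⟨a, rfl⟩ b
      simp only [simpleSystem, eps]
      split_ifs <;> simp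
    exact hle hβ
  · intro hβ
    rw [eq_sum_smul_root β]
    exact sum_mem fun a _ =>
      (simpleSystem S).zsmul_mem_cone ((simpleSystem S).root_mem_cone a) (hβ a)

theorem fund.form_root_nonpos {γ : V S → ℤ} (h : fund S γ) (a : V S) :
    (simpleSystem S).form ((simpleSystem S).root a) γ ≤ 0 := by
  rw [SimpleSystem.form_comm, ← bform_eq_form]
  exact h.2.2.2 a

theorem fund.form_self_nonpos {γ : V S → ℤ} (h : fund S γ) : (simpleSystem S).form γ γ ≤ 0 := by
  nth_rewrite 1 [eq_sum_smul_root γ]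
  simp only [map_sum, map_smul, LinearMap.sum_apply, LinearMap.smul_apply, smul_eq_mul]
  exact Finset.sum_nonpos fun a _ =>
    mul_nonpos_of_nonneg_of_nonpos (h.2.1 a) (h.form_root_nonpos a)

theorem fund.weyl_nonneg {γ : V S → ℤ} (h : fund S γ) (w : (simpleSystem S).coxeterMatrix.Group) :
    0 ≤ (simpleSystem S).weyl w γ :=
  mem_cone_iff_nonneg.1 <|
    (simpleSystem S).weyl_mem_cone (mem_cone_iff_nonneg.2 h.2.1) h.form_root_nonpos w

theorem isRoot.weyl {β : V S → ℤ} (h : isRoot S β) (w : (simpleSystem S).coxeterMatrix.Group) :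
    isRoot S ((simpleSystem S).weyl w β) := by
  obtain ⟨v, γ, hγ, rfl⟩ := isRoot_iff_exists_weyl.1 h
  exact isRoot_iff_exists_weyl.2 ⟨w * v, γ, hγ, by rw [map_mul, LinearEquiv.mul_apply]⟩

theorem isRoot.nonneg_or_nonpos {β : V S → ℤ} (h : isRoot S β) : 0 ≤ β ∨ β ≤ 0 := by
  obtain ⟨w, γ, ⟨a, rfl⟩ | hγ | hγ, rfl⟩ := isRoot_iff_exists_weyl.1 h
  · rw [← neg_nonneg, ← mem_cone_iff_nonneg, ← mem_cone_iff_nonneg]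
    exact (simpleSystem S).weyl_root_mem_cone_or_neg_mem_cone w a
  · exact .inl (hγ.weyl_nonneg w)
  · have hneg := hγ.weyl_nonneg w
    rw [map_neg] at hneg
    exact .inr (neg_nonneg.1 hneg)

theorem isRoot.ne_zero {β : V S → ℤ} (h : isRoot S β) : β ≠ 0 := by
  obtain ⟨w, γ, hγ, rfl⟩ := isRoot_iff_exists_weyl.1 h
  rw [Ne, LinearEquiv.map_eq_zero_iff]
  rintro rfl
  rcases hγ with ⟨a, ha⟩ | hγ | hγ
  · simpa [eps] using congrFun ha a
  · exact hγ.1 rfl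
  · exact hγ.1 neg_zero

theorem isRoot.form_self {β : V S → ℤ} (h : isRoot S β) :
    (simpleSystem S).form β β = 2 ∨ (simpleSystem S).form β β ≤ 0 := by
  obtain ⟨w, γ, hγ, rfl⟩ := isRoot_iff_exists_weyl.1 h
  rw [SimpleSystem.form_weyl]
  rcases hγ with ⟨a, rfl⟩ | hγ | hγ
  · exact .inl ((simpleSystem S).form_root_self a)
  · exact .inr hγ.form_self_nonpos
  · exact .inr (by simpa using hγ.form_self_nonpos)

theorem isRoot.eq_of_eq_smul {β ε : V S → ℤ} {t : ℤ} (h : isRoot S β) (hβ : β = t • ε)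
    (ht : 0 ≤ t) (hε : (simpleSystem S).form ε ε = 2) : β = ε := by
  have ht_ne : t ≠ 0 := by
    rintro rfl
    exact h.ne_zero (hβ.trans (zero_smul ℤ ε))
  have hform : (simpleSystem S).form β β = 2 * (t * t) := by
    simp only [hβ, map_smul, LinearMap.smul_apply, smul_eq_mul, hε]
    ring
  have hpos : 0 < t := lt_of_le_of_ne ht ht_ne.symm
  have ht_one : t = 1 := by
    rcases h.form_self with h₂ | h₀ <;> nlinarith
  rw [hβ, ht_one, one_smul]

variable (S)

/-- The index set `I_irr`. -/
abbrev IrrIndex := {i : Fin (S.p + 1) // Iirr S i}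

variable (I : ∀ i : Fin (S.p + 1), Fin (S.m i))

theorem epsJ_vI (i : IrrIndex S) (j : Fin (S.m i.1)) :
    epsJ S I (vI S i j) = if j = I i.1 then 1 else 0 := by
  simp [epsJ, vI, Fin.ext_iff]

theorem eps_vI_vI (i i' : IrrIndex S) (j : Fin (S.m i'.1)) :
    eps S (vI S i (I i.1)) (vI S i' j) = if i' = i then epsJ S I (vI S i' j) else 0 := by
  by_cases h : i' = i
  · subst h
    rw [epsJ_vI]
    simp [eps, vI]
  · simp [eps, vI, h]

theorem epsJ_eq_sum : epsJ S I = ∑ i, eps S (vI S i (I i.1)) := by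
  ext b
  rw [Finset.sum_apply]
  rcases b with ⟨i, j⟩ | b
  · change epsJ S I (vI S i j) = ∑ i', eps S (vI S i' (I i'.1)) (vI S i j)
    simp only [eps_vI_vI, Finset.sum_ite_eq, Finset.mem_univ, if_true]
  · simp [epsJ, eps, vI]

theorem arr_vI_vI_of_ne {i i' : IrrIndex S} (h : i ≠ i')
    (j : Fin (S.m i.1)) (j' : Fin (S.m i'.1)) :
    arr S (vI S i j) (vI S i' j') = if i = i0 S then 1 else 0 := by
  have hi : i.1 = 0 ∧ i'.1 ≠ 0 ↔ i = i0 S := by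
    refine ⟨fun hz => Subtype.ext hz.1, ?_⟩
    rintro rfl
    exact ⟨rfl, fun hz => h (Subtype.ext hz.symm)⟩
  simp only [vI, arr, dif_neg h, add_zero, hi]

theorem form_eps_vI_of_ne {i i' : IrrIndex S} (h : i ≠ i')
    (j : Fin (S.m i.1)) (j' : Fin (S.m i'.1)) :
    (simpleSystem S).form (eps S (vI S i j)) (eps S (vI S i' j')) =
      -((if i = i0 S then 1 else 0) + if i' = i0 S then 1 else 0) := by
  have hv : vI S i j ≠ vI S i' j' := fun hv => h (congrArg Sigma.fst (Sum.inl_injective hv))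
  rw [simpleSystem_form, eps_eq_single, eps_eq_single, eulerForm_single, eulerForm_single,
    if_neg hv, if_neg hv.symm, arr_vI_vI_of_ne S h, arr_vI_vI_of_ne S h.symm]
  push_cast
  ring

theorem exists_weyl_root_eq_epsJ :
    ∃ w a, (simpleSystem S).weyl w ((simpleSystem S).root a) = epsJ S I := by
  have hcenter : ∀ i ∈ Finset.univ.erase (i0 S), (simpleSystem S).form
      (eps S (vI S i (I i.1))) (eps S (vI S (i0 S) (I 0))) = -1 := fun i hi => by
    have hi0 := Finset.ne_of_mem_erase hi
    exact (form_eps_vI_of_ne S hi0 _ _).trans (by simp [hi0])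
  have horth : ∀ i ∈ Finset.univ.erase (i0 S), ∀ i' ∈ Finset.univ.erase (i0 S), i ≠ i' →
      (simpleSystem S).form (eps S (vI S i (I i.1))) (eps S (vI S i' (I i'.1))) = 0 :=
    fun i hi i' hi' hne => by
      simp [form_eps_vI_of_ne S hne, Finset.ne_of_mem_erase hi, Finset.ne_of_mem_erase hi']
  obtain ⟨w, hw⟩ := (simpleSystem S).exists_weyl_root_eq_add_sum _ _ _ hcenter horth
  refine ⟨w, vI S (i0 S) (I 0), hw.trans ?_⟩
  rw [epsJ_eq_sum, ← Finset.add_sum_erase _ _ (Finset.mem_univ (i0 S))]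
  rfl

theorem form_epsJ_self : (simpleSystem S).form (epsJ S I) (epsJ S I) = 2 := by
  obtain ⟨w, a, h⟩ := exists_weyl_root_eq_epsJ S I
  rw [← h, SimpleSystem.form_weyl, SimpleSystem.form_root_self]

theorem sum_epsJ_vI (i : IrrIndex S) : ∑ j, epsJ S I (vI S i j) = 1 := by
  simp [epsJ_vI]

variable {S}

theorem isRoot_sJ {β : V S → ℤ} (h : isRoot S β) : isRoot S (sJ S I β) := by
  obtain ⟨w, a, hw⟩ := exists_weyl_root_eq_epsJ S I
  have hsJ : sJ S I β = (simpleSystem S).weyl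
      (w * (simpleSystem S).coxeterSystem.simple a * w⁻¹) β := by
    rw [SimpleSystem.weyl_conj_simple, hw, SimpleSystem.form_comm, ← bform_eq_form]
    rfl
  rw [hsJ]
  exact h.weyl _

theorem inL_sJ {β : V S → ℤ} (h : inL S β) : inL S (sJ S I β) := by
  intro i hi
  have hsum (i' : IrrIndex S) :
      ∑ j, sJ S I β (vI S i' j) = ∑ j, β (vI S i' j) - bform S β (epsJ S I) := by
    simp only [sJ, Finset.sum_sub_distrib, ← Finset.mul_sum, sum_epsJ_vI, mul_one]
  have h0 : ∑ j, β (vI S (i0 S) j) = ∑ j, β (vI S i j) := h i hi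
  change ∑ j, sJ S I β (vI S (i0 S) j) = ∑ j, sJ S I β (vI S i j)
  rw [hsum, hsum, h0]

theorem eq_smul_epsJ {β : V S → ℤ} (h : inL S β)
    (hoff : ∀ b, epsJ S I b = 0 → β b = 0) : β = β (vI S (i0 S) (I 0)) • epsJ S I := by
  have hoff_vI (i : IrrIndex S) (j : Fin (S.m i.1)) (hj : j ≠ I i.1) :
      β (vI S i j) = 0 := hoff _ (by rw [epsJ_vI, if_neg hj])
  have hsum (i : IrrIndex S) : ∑ j, β (vI S i j) = β (vI S i (I i.1)) :=
    Finset.sum_eq_single_of_mem _ (Finset.mem_univ _) fun j _ hj => hoff_vI i j hj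
  have hconst (i : IrrIndex S) : β (vI S i (I i.1)) = β (vI S (i0 S) (I 0)) := by
    by_cases hi : i.1 = 0
    · obtain rfl : i = i0 S := Subtype.ext hi
      rfl
    · exact ((hsum i).symm.trans (h i hi).symm).trans (hsum (i0 S))
  ext b
  rw [Pi.smul_apply, smul_eq_mul]
  rcases b with ⟨i, j⟩ | b
  · change β (vI S i j) = _ * epsJ S I (vI S i j)
    by_cases hj : j = I i.1
    · rw [epsJ_vI, if_pos hj, mul_one, hj, hconst]
    · rw [epsJ_vI, if_neg hj, mul_zero, hoff_vI i j hj]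
  · rw [hoff _ rfl, show epsJ S I (.inr b) = 0 from rfl, mul_zero]

end Quiver

/-- If `α ∈ R̃⁺` (a positive root of `Q` lying in `L`) and `𝐢 ∈ 𝒥` are such that
`s_𝐢(α) ∉ R̃⁺`, then `α = ε_𝐢`. -/
theorem statement13 (S : Setup) (α : V S → ℤ) (I : ∀ i : Fin (S.p+1), Fin (S.m i))
    (hα : isPosRoot S α ∧ inL S α)
    (h : ¬ (isPosRoot S (sJ S I α) ∧ inL S (sJ S I α))) :
    α = epsJ S I := by
  obtain ⟨⟨hroot, hnonneg⟩, hL⟩ := hα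
  have hsJ_root : isRoot S (sJ S I α) := isRoot_sJ I hroot
  have hsJ_nonpos : sJ S I α ≤ 0 :=
    hsJ_root.nonneg_or_nonpos.resolve_left fun h0 => h ⟨⟨hsJ_root, h0⟩, inL_sJ I hL⟩
  have hoff (b : V S) (hb : epsJ S I b = 0) : α b = 0 :=
    le_antisymm (by simpa [sJ, hb] using hsJ_nonpos b) (hnonneg b)
  exact hroot.eq_of_eq_smul (eq_smul_epsJ I hL hoff) (hnonneg _) (form_epsJ_self S I)

end

end DS
end
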